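/- arXiv:2301.04459 — 12 statements merged into one kernel-verified Lean document; each statement's English description precedes it below -/
import Mathlib

section
/- Let G be a group in which every subgroup generated by two elements is either a free group or abelian. Let d ≥ 1 be an integer, let κ_0, κ_1, …, κ_d ∈ ℤ, and set ε := κ_d − κ_{d−1} − ⋯ − κ_1 − κ_0. Assume ε ≠ 0. If α, γ ∈ G satisfy the relation γ^d · α^{κ_d} = α^{κ_0} · γ · α^{κ_1} · γ ⋯ α^{κ_{d−1}} · γ, then α^ε = 1. -/
/-!
In the abelianization of `⟨α, γ⟩` the powers of `γ` cancel from the relation, which then reads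
`α ^ ε = 1`. If `⟨α, γ⟩` is abelian, this is the claim. If `⟨α, γ⟩` is free, its abelianization is
free abelian, so `α` becomes trivial there and the abelianization is generated by `γ` alone. Hence
the free group has rank at most one and is abelian too.
-/

theorem prod_map_range_zpow_mul {A : Type*} [CommGroup A] (a b : A) (κ : ℕ → ℤ) (n : ℕ) :
    ((List.range n).map fun i => a ^ κ i * b).prod = b ^ n * a ^ ∑ i ∈ Finset.range n, κ i := by
  induction n with
  | zero => simp
  | succ n ih =>
    rw [List.prod_range_succ, ih, Finset.sum_range_succ, zpow_add, pow_succ, mul_comm (a ^ κ n) b,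
      mul_mul_mul_comm]

theorem map_zpow_sub_sum_eq_one {H A : Type*} [Group H] [CommGroup A] (f : H →* A) {a b : H}
    {κ : ℕ → ℤ} {n : ℕ} {k : ℤ}
    (hrel : b ^ n * a ^ k = ((List.range n).map fun i => a ^ κ i * b).prod) :
    f a ^ (k - ∑ i ∈ Finset.range n, κ i) = 1 := by
  have hmap : f b ^ n * f a ^ k = f b ^ n * f a ^ ∑ i ∈ Finset.range n, κ i := by
    rw [← prod_map_range_zpow_mul]
    simpa [map_list_prod, Function.comp_def] using congrArg f hrel
  rw [zpow_sub, mul_left_cancel hmap, mul_inv_cancel]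

theorem subsingleton_of_isAddCyclic_finsupp (X M : Type*) [AddGroup M] [Infinite M]
    [IsAddCyclic (X →₀ M)] : Subsingleton X := by
  refine ⟨fun x y => ?_⟩
  by_contra hxy
  let coords : (X →₀ M) →+ M × M := (Finsupp.applyAddHom x).prod (Finsupp.applyAddHom y)
  have hcoords : Function.Surjective coords := fun p =>
    ⟨.single x p.1 + .single y p.2, by simp [coords, hxy, Ne.symm hxy]⟩
  exact not_isAddCyclic_prod_of_infinite_nontrivial M M (isAddCyclic_of_surjective coords hcoords)

theorem isCyclic_freeGroup_of_subsingleton (X : Type*) [Subsingleton X] :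
    IsCyclic (FreeGroup X) := by
  rcases isEmpty_or_nonempty X with _ | ⟨⟨x⟩⟩
  · infer_instance
  · have := uniqueOfSubsingleton x
    infer_instance

/-- The abelianization of a free group, identified with the free abelian group on a basis. The
latter is encoded as the finitely supported functions `X →₀ ℤ`, written multiplicatively. -/
noncomputable def abelianizationEquivFinsupp {X G : Type*} [Group G] (b : FreeGroupBasis X G) :
    Abelianization G ≃* Multiplicative (X →₀ ℤ) :=
  b.repr.abelianizationCongr.trans
    (AddEquiv.toMultiplicativeRight (FreeAbelianGroup.equivFinsupp X))

theorem isMulTorsionFree_abelianization_of_isFreeGroup (G : Type*) [Group G] [IsFreeGroup G] :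
    IsMulTorsionFree (Abelianization G) :=
  let e := abelianizationEquivFinsupp (IsFreeGroup.basis G)
  e.injective.isMulTorsionFree e.toMonoidHom

theorem isCyclic_of_isFreeGroup_of_isCyclic_abelianization (G : Type*) [Group G] [IsFreeGroup G]
    [IsCyclic (Abelianization G)] : IsCyclic G := by
  let e := abelianizationEquivFinsupp (IsFreeGroup.basis G)
  have : IsCyclic (Multiplicative (IsFreeGroup.Generators G →₀ ℤ)) :=
    isCyclic_of_surjective e e.surjective
  have : IsAddCyclic (IsFreeGroup.Generators G →₀ ℤ) := isCyclic_multiplicative_iff.mp this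
  have := subsingleton_of_isAddCyclic_finsupp (IsFreeGroup.Generators G) ℤ
  have := isCyclic_freeGroup_of_subsingleton (IsFreeGroup.Generators G)
  exact isCyclic_of_surjective (IsFreeGroup.mulEquiv G) (IsFreeGroup.mulEquiv G).surjective

section TwoGenerators

theorem closure_eq_top_of_coe_image_eq {G : Type*} [Group G] {k : Set G}
    {s : Set (Subgroup.closure k)} (hs : (↑) '' s = k) : Subgroup.closure s = ⊤ := by
  apply Subgroup.map_injective (Subgroup.closure k).subtype_injective
  rw [MonoidHom.map_closure, Subgroup.coe_subtype, hs, ← MonoidHom.range_eq_map,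
    Subgroup.range_subtype]

variable {G H : Type*} [Group G] [Group H] {a b : G}

theorem isCyclic_of_surjective_of_closure_pair (f : G →* H) (hf : Function.Surjective f)
    (hab : Subgroup.closure {a, b} = ⊤) (ha : f a = 1) : IsCyclic H := by
  refine isCyclic_iff_exists_zpowers_eq_top.mpr ⟨f b, ?_⟩
  rw [Subgroup.zpowers_eq_closure, ← Subgroup.closure_insert_one, ← ha, ← Set.image_pair,
    ← MonoidHom.map_closure, hab, Subgroup.map_top_of_surjective f hf]

theorem isCyclic_of_abelianization_zpow_eq_one [IsFreeGroup G]
    (hab : Subgroup.closure {a, b} = ⊤) {n : ℤ} (hn : n ≠ 0)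
    (ha : Abelianization.of a ^ n = 1) : IsCyclic G := by
  have := isMulTorsionFree_abelianization_of_isFreeGroup G
  have ha' : Abelianization.of a = 1 := (IsMulTorsionFree.zpow_eq_one_iff_left hn).mp ha
  have : IsCyclic (Abelianization G) := isCyclic_of_surjective_of_closure_pair
    Abelianization.of QuotientGroup.mk_surjective hab ha'
  exact isCyclic_of_isFreeGroup_of_isCyclic_abelianization G

theorem zpow_eq_one_of_abelianization_zpow_eq_one [IsMulCommutative G] {n : ℤ}
    (ha : Abelianization.of a ^ n = 1) : a ^ n = 1 := by
  open scoped IsMulCommutative in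
  have hinj : Function.Injective (Abelianization.of : G →* Abelianization G) :=
    Abelianization.equivOfComm.injective
  rwa [← map_zpow, map_eq_one_iff _ hinj] at ha

theorem isMulCommutative_of_abelianization_zpow_eq_one (h : IsFreeGroup G ∨ IsMulCommutative G)
    (hab : Subgroup.closure {a, b} = ⊤) {n : ℤ} (hn : n ≠ 0)
    (ha : Abelianization.of a ^ n = 1) : IsMulCommutative G := by
  rcases h with hfree | hcomm
  · have := isCyclic_of_abelianization_zpow_eq_one hab hn ha
    infer_instance
  · exact hcomm

end TwoGenerators

theorem pow_eps_eq_one_of_relation_general {G : Type*} [Group G] {α γ : G}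
    (hG : IsFreeGroup (Subgroup.closure {α, γ}) ∨ IsMulCommutative (Subgroup.closure {α, γ}))
    {d : ℕ} {κ : ℕ → ℤ} (hε0 : κ d - ∑ i ∈ Finset.range d, κ i ≠ 0)
    (hrel : γ ^ d * α ^ κ d = ((List.range d).map fun i => α ^ κ i * γ).prod) :
    α ^ (κ d - ∑ i ∈ Finset.range d, κ i) = 1 := by
  let a : Subgroup.closure {α, γ} := ⟨α, Subgroup.subset_closure (by simp)⟩
  let b : Subgroup.closure {α, γ} := ⟨γ, Subgroup.subset_closure (by simp)⟩
  have hab : Subgroup.closure {a, b} = ⊤ := closure_eq_top_of_coe_image_eq (Set.image_pair _ a b)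
  have hrel' : b ^ d * a ^ κ d = ((List.range d).map fun i => a ^ κ i * b).prod := by
    apply Subgroup.subtype_injective
    rwa [map_list_prod, List.map_map]
  have ha := map_zpow_sub_sum_eq_one Abelianization.of hrel'
  have := isMulCommutative_of_abelianization_zpow_eq_one hG hab hε0 ha
  exact congrArg Subtype.val (zpow_eq_one_of_abelianization_zpow_eq_one ha)

/-- Let `G` be a group in which every 2-generated subgroup is free or abelian.  Let `d ≥ 1`,
`κ₀, …, κ_d ∈ ℤ` and `ε = κ_d - κ_{d-1} - ⋯ - κ₀ ≠ 0`.  If `α, γ ∈ G` satisfy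
`γ^d α^{κ_d} = α^{κ₀} γ α^{κ₁} γ ⋯ α^{κ_{d-1}} γ`, then `α^ε = 1`. -/
theorem pow_eps_eq_one_of_relation {G : Type u} [Group G]
    (hG : ∀ a b : G,
      (∃ X : Type u, Nonempty (FreeGroup X ≃* Subgroup.closure ({a, b} : Set G))) ∨
      (∀ x y : Subgroup.closure ({a, b} : Set G), x * y = y * x))
    (d : ℕ) (hd : 1 ≤ d) (κ : ℕ → ℤ) (ε : ℤ)
    (hε : ε = κ d - ∑ i ∈ Finset.range d, κ i) (hε0 : ε ≠ 0)
    (α γ : G)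
    (hrel : γ ^ d * α ^ κ d = ((List.range d).map (fun i => α ^ κ i * γ)).prod) :
    α ^ ε = 1 := by
  subst hε
  refine pow_eps_eq_one_of_relation_general ((hG α γ).imp ?_ isMulCommutative_iff.mpr) hε0 hrel
  exact fun ⟨_, ⟨e⟩⟩ => IsFreeGroup.ofMulEquiv e
end

section
/- Let n ≥ 1 and let α, γ be elements of SL_n(ℤ), the group of n×n integer matrices of determinant 1. If γ α γ^{−1} = α^κ for some integer κ > 1, then α is a torsion element, i.e., α has finite order. -/
/-!
Squaring the conjugator, we may replace `κ` by the natural number `k = κ ^ 2`. If `α` is conjugate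
to `α ^ k` with `1 < k`, then `x ↦ x ^ k` maps the finite set of eigenvalues of `α` to itself, so
every eigenvalue is a root of unity and some power `u = α ^ m` with `0 < m` is unipotent. Suppose
`u ≠ 1` and let `d ≠ 0` be the largest exponent with `(u - 1) ^ d ≠ 0`. As `u` is conjugate to
`u ^ k`, the matrix `(u - 1) ^ d` is conjugate to `(u ^ k - 1) ^ d = k ^ d • (u - 1) ^ d`.
The conjugator and its inverse have entries in the base ring, so iterating shows that the entries of
`(u - 1) ^ d` are divisible by every power of the non-unit `k ^ d`, hence vanish: a contradiction.
-/

open Polynomial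

theorem exists_pow_eq_one_of_mapsTo_pow {M : Type*} [Monoid M] {S : Set M} (hfin : S.Finite)
    (hunit : ∀ x ∈ S, IsUnit x) {k : ℕ} (hk : 1 < k) (hmaps : Set.MapsTo (· ^ k) S S) :
    ∃ m, 0 < m ∧ ∀ x ∈ S, x ^ m = 1 := by
  have : Finite S := hfin
  have hmem (i : ℕ) (x : S) : (x : M) ^ k ^ i ∈ S := by
    simpa only [pow_iterate] using hmaps.iterate i x.2
  obtain ⟨i, j, hij, heq⟩ :=
    (Set.Finite.pi' fun _ : S ↦ hfin).exists_lt_map_eq_of_forall_mem hmem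
  have hpow : k ^ i < k ^ j := Nat.pow_lt_pow_right hk hij
  refine ⟨k ^ j - k ^ i, Nat.sub_pos_of_lt hpow, fun x hx ↦ ?_⟩
  have hx_eq : x ^ k ^ i = x ^ k ^ j := congrFun heq ⟨x, hx⟩
  refine ((hunit x hx).pow (k ^ i)).mul_left_cancel ?_
  rw [← pow_add, Nat.add_sub_cancel' hpow.le, mul_one, hx_eq]

section GeomSum

variable {A : Type*} [Ring A]

theorem sub_one_dvd_geom_sum_pow_sub_natCast_pow (u : A) (k d : ℕ) :
    u - 1 ∣ (∑ i ∈ Finset.range k, u ^ i) ^ d - (k : A) ^ d := by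
  have hsum : u - 1 ∣ ∑ i ∈ Finset.range k, u ^ i - (k : A) := by
    have hterm (i : ℕ) : u - 1 ∣ u ^ i - 1 := ⟨_, (mul_geom_sum u i).symm⟩
    simpa using Finset.dvd_sum fun i (_ : i ∈ Finset.range k) ↦ hterm i
  exact hsum.trans ((Nat.commute_cast _ k).sub_dvd_pow_sub_pow d)

theorem pow_sub_one_pow_eq_smul {u : A} {d : ℕ} (hu : (u - 1) ^ (d + 1) = 0) (k : ℕ) :
    (u ^ k - 1) ^ d = k ^ d • (u - 1) ^ d := by
  obtain ⟨q, hq⟩ := sub_one_dvd_geom_sum_pow_sub_natCast_pow u k d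
  have hcomm : Commute (u - 1) (∑ i ∈ Finset.range k, u ^ i) :=
    (mul_geom_sum u k).trans (geom_sum_mul u k).symm
  calc (u ^ k - 1) ^ d
      = (u - 1) ^ d * (∑ i ∈ Finset.range k, u ^ i) ^ d := by
        rw [← mul_geom_sum, hcomm.mul_pow]
    _ = (u - 1) ^ d * (k : A) ^ d + (u - 1) ^ (d + 1) * q := by
        rw [sub_eq_iff_eq_add'.1 hq, mul_add, ← mul_assoc, pow_succ]
    _ = k ^ d • (u - 1) ^ d := by
        rw [hu, zero_mul, add_zero, nsmul_eq_mul, Nat.cast_pow,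
          ((Nat.cast_commute k (u - 1)).pow_pow d d).eq]

end GeomSum

section Conjugacy

variable {R A : Type*} [CommSemiring R] [Ring A] [Algebra R A] {a b : A}

variable (R) in
theorem spectrum_eq_of_isConj (h : IsConj a b) : spectrum R a = spectrum R b := by
  obtain ⟨c, hc⟩ := h
  rw [← (Units.mul_inv_eq_iff_eq_mul c).2 hc.eq, spectrum.units_conjugate]

theorem isConj_pow_smul {r : R} (h : IsConj a (r • a)) (m : ℕ) : IsConj a (r ^ m • a) := by
  induction m with
  | zero => simpa using IsConj.refl a
  | succ m ih =>
    obtain ⟨c, hc⟩ := ih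
    exact h.trans ⟨c, by simpa [smul_smul, pow_succ'] using hc.smul_right r⟩

theorem isConj_sub_one (h : IsConj a b) : IsConj (a - 1) (b - 1) := by
  obtain ⟨c, hc⟩ := h
  exact ⟨c, hc.sub_right (SemiconjBy.one_right _)⟩

theorem isConj_pow_natAbs_sq {G : Type*} [Group G] {g : G} {κ : ℤ} (h : IsConj g (g ^ κ)) :
    IsConj g (g ^ κ.natAbs ^ 2) := by
  obtain ⟨c, hc⟩ := isConj_iff.1 h
  have hκ : IsConj (g ^ κ) (g ^ κ ^ 2) :=
    isConj_iff.2 ⟨c, by rw [← conj_zpow, hc, ← zpow_mul, sq]⟩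
  rw [← zpow_natCast, Nat.cast_pow, Int.natAbs_sq]
  exact h.trans hκ

end Conjugacy

section Field

variable {ι K : Type*} [Fintype ι] [DecidableEq ι] [Field K] {A : Matrix ι ι K}

theorem isNilpotent_aeval_of_forall_mem_spectrum_isRoot (hA : A.charpoly.Splits) {p : K[X]}
    (hp : ∀ x ∈ spectrum K A, p.IsRoot x) : IsNilpotent (aeval A p) := by
  have hdvd : A.charpoly ∣ p ^ A.charpoly.roots.card := by
    rw [← Multiset.prod_replicate, ← Multiset.map_const']
    conv_lhs => rw [hA.eq_prod_roots_of_monic A.charpoly_monic]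
    refine Multiset.prod_dvd_prod_of_dvd _ _ fun x hx ↦ dvd_iff_isRoot.2 (hp x ?_)
    exact Matrix.mem_spectrum_iff_isRoot_charpoly.2 (isRoot_of_mem_roots hx)
  refine ⟨A.charpoly.roots.card, ?_⟩
  rw [← map_pow]
  exact aeval_eq_zero_of_dvd_aeval_eq_zero hdvd A.aeval_self_charpoly

theorem exists_isNilpotent_pow_sub_one_of_splits (hsplits : A.charpoly.Splits) (hA : IsUnit A)
    {k : ℕ} (hk : 1 < k) (hconj : IsConj A (A ^ k)) : ∃ m, 0 < m ∧ IsNilpotent (A ^ m - 1) := by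
  have hmaps : Set.MapsTo (· ^ k) (spectrum K A) (spectrum K A) := fun x hx ↦ by
    rw [spectrum_eq_of_isConj K hconj]
    exact spectrum.pow_mem_pow A k hx
  have hunit (x : K) (hx : x ∈ spectrum K A) : IsUnit x :=
    (spectrum.ne_zero_of_mem_of_unit (a := hA.unit) hx).isUnit
  obtain ⟨m, hm, hone⟩ := exists_pow_eq_one_of_mapsTo_pow A.finite_spectrum hunit hk hmaps
  refine ⟨m, hm, ?_⟩
  have hroot (x : K) (hx : x ∈ spectrum K A) : (X ^ m - 1 : K[X]).IsRoot x := by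
    simp [hone x hx]
  simpa using isNilpotent_aeval_of_forall_mem_spectrum_isRoot hsplits hroot

end Field

section Domain

variable {ι R : Type*} [Fintype ι] [DecidableEq ι] [CommRing R] [IsDomain R] {A : Matrix ι ι R}

theorem exists_isNilpotent_pow_sub_one_of_isConj_pow (hA : IsUnit A) {k : ℕ} (hk : 1 < k)
    (hconj : IsConj A (A ^ k)) : ∃ m, 0 < m ∧ IsNilpotent (A ^ m - 1) := by
  let f : Matrix ι ι R →+* Matrix ι ι (AlgebraicClosure (FractionRing R)) :=
    ((algebraMap (FractionRing R) _).comp (algebraMap R _)).mapMatrix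
  have hf : Function.Injective f :=
    Matrix.map_injective ((algebraMap (FractionRing R) _).injective.comp
      (IsFractionRing.injective R _))
  have hconj_map : IsConj (f A) (f A ^ k) := by
    simpa only [map_pow] using! f.toMonoidHom.map_isConj hconj
  obtain ⟨m, hm, hnil⟩ := exists_isNilpotent_pow_sub_one_of_splits
    (IsAlgClosed.splits (f A).charpoly) (hA.map f) hk hconj_map
  refine ⟨m, hm, (IsNilpotent.map_iff hf).1 ?_⟩
  simpa only [map_sub, map_pow, map_one] using hnil

variable [WfDvdMonoid R]

theorem eq_zero_of_isConj_smul {r : R} (hr : ¬IsUnit r) (h : IsConj A (r • A)) : A = 0 := by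
  ext i j
  by_contra hij
  obtain ⟨m, hm⟩ := FiniteMultiplicity.of_not_isUnit hr hij
  obtain ⟨c, hc⟩ := (isConj_pow_smul h (m + 1)).symm
  have hA : A = r ^ (m + 1) • ((c : Matrix ι ι R) * A * (↑c⁻¹ : Matrix ι ι R)) := by
    rw [← smul_mul_assoc, ← mul_smul_comm, hc.eq, Units.mul_inv_cancel_right]
  exact hm ⟨_, congrFun₂ hA i j⟩

theorem eq_one_of_isConj_pow_of_isNilpotent_sub_one {k : ℕ} (hk : ¬IsUnit (k : R))
    (hnil : IsNilpotent (A - 1)) (hconj : IsConj A (A ^ k)) : A = 1 := by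
  by_contra hne
  have : Nontrivial (Matrix ι ι R) := ⟨A, 1, hne⟩
  obtain ⟨d, hd⟩ := Nat.exists_eq_succ_of_ne_zero (pos_nilpotencyClass_iff.2 hnil).ne'
  obtain ⟨hzero, hnonzero⟩ := nilpotencyClass_eq_succ_iff.1 hd
  have hd0 : d ≠ 0 := by
    rintro rfl
    exact hne (sub_eq_zero.1 (by simpa using hzero))
  have hpow : IsConj ((A - 1) ^ d) ((k : R) ^ d • (A - 1) ^ d) := by
    have := (isConj_sub_one hconj).pow d
    rwa [pow_sub_one_pow_eq_smul hzero, ← Nat.cast_smul_eq_nsmul R, Nat.cast_pow] at this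
  exact hnonzero (eq_zero_of_isConj_smul (mt (isUnit_pow_iff hd0).1 hk) hpow)

theorem isOfFinOrder_of_isConj_pow {α : GL ι R} {k : ℕ} (hk : ¬IsUnit (k : R))
    (h : IsConj α (α ^ k)) : IsOfFinOrder α := by
  obtain rfl | hk0 := eq_or_ne k 0
  · obtain rfl : α = 1 := by simpa using h
    exact IsOfFinOrder.one
  have hk1 : k ≠ 1 := by
    rintro rfl
    simp at hk
  have hconj : IsConj (α : Matrix ι ι R) ((α : Matrix ι ι R) ^ k) := by
    simpa using (Units.coeHom _).map_isConj h
  obtain ⟨m, hm, hnil⟩ := exists_isNilpotent_pow_sub_one_of_isConj_pow α.isUnit (by lia) hconj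
  have hpow : (α : Matrix ι ι R) ^ m = 1 :=
    eq_one_of_isConj_pow_of_isNilpotent_sub_one hk hnil
      (by simpa only [pow_right_comm] using hconj.pow m)
  exact isOfFinOrder_iff_pow_eq_one.2 ⟨m, hm, Units.ext (by simpa using hpow)⟩

end Domain

theorem sl_n_torsion_of_conj_pow_general {ι R : Type*} [Fintype ι] [DecidableEq ι] [CommRing R]
    [IsDomain R] [WfDvdMonoid R] {α : GL ι R} {κ : ℤ} (hκ : ¬IsUnit (κ : R))
    (h : IsConj α (α ^ κ)) : IsOfFinOrder α := by
  have hsq : ¬IsUnit ((κ.natAbs ^ 2 : ℕ) : R) := by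
    rwa [← Int.cast_natCast, Nat.cast_pow, Int.natAbs_sq, Int.cast_pow, isUnit_pow_iff two_ne_zero]
  exact isOfFinOrder_of_isConj_pow hsq (isConj_pow_natAbs_sq h)

/-- If `α, γ ∈ SL_n(ℤ)` satisfy `γ α γ⁻¹ = α^κ` for some integer `κ > 1`, then `α` is a
torsion element, i.e. has finite order. -/
theorem sl_n_torsion_of_conj_pow (n : ℕ) (hn : 1 ≤ n)
    (α γ : Matrix.SpecialLinearGroup (Fin n) ℤ) (κ : ℤ) (hκ : 1 < κ)
    (h : γ * α * γ⁻¹ = α ^ κ) :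
    IsOfFinOrder α := by
  have hconj := Matrix.SpecialLinearGroup.toGL.map_isConj (isConj_iff.2 ⟨γ, h⟩)
  exact Matrix.SpecialLinearGroup.toGL_injective.isOfFinOrder_iff.1 <|
    sl_n_torsion_of_conj_pow_general (κ := κ) (by rw [Int.cast_id, Int.isUnit_iff]; lia)
      (by simpa only [map_zpow] using hconj)
end

section
/- Let n ≥ 1, let M be an invertible n×n complex matrix, and suppose there exist an invertible n×n complex matrix P and an integer κ with |κ| ≥ 2 such that P M P^{−1} = M^κ. Then every eigenvalue of M is a root of unity. -/
/-!
Conjugate matrices have the same spectrum, and the `κ`-th powers of the eigenvalues of `M` are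
eigenvalues of `M ^ κ`, so the finite set of eigenvalues of `M` is stable under `x ↦ x ^ κ`. The
orbit `x, x ^ κ, x ^ κ ^ 2, …` of an eigenvalue `x` must therefore repeat, and since `2 ≤ |κ|` the
exponents are pairwise distinct, so `x` has finite order.
-/

theorem isOfFinOrder_of_mapsTo_zpow {G : Type*} [Group G] {S : Set G} (hS : S.Finite) {κ : ℤ}
    (hκ : 2 ≤ |κ|) (hmaps : Set.MapsTo (· ^ κ) S S) {x : G} (hx : x ∈ S) : IsOfFinOrder x := by
  by_contra hord
  have orbit_mem (i : ℕ) : x ^ κ ^ i ∈ S := by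
    induction i with
    | zero => simpa using hx
    | succ i ih => simpa only [pow_succ, zpow_mul] using hmaps ih
  have exponents_injective : Function.Injective fun i : ℕ => κ ^ i :=
    Int.pow_right_injective (by rwa [Int.abs_eq_natAbs, Nat.ofNat_le_cast] at hκ)
  have orbit_injective : Function.Injective fun i : ℕ => x ^ κ ^ i :=
    (injective_zpow_iff_not_isOfFinOrder.mpr hord).comp exponents_injective
  exact Set.infinite_of_injective_forall_mem orbit_injective orbit_mem hS

section Spectrum

variable {𝕜 A : Type*} [Field 𝕜] [Ring A] [Algebra 𝕜 A]

theorem zpow_mem_spectrum_zpow {a : Aˣ} {x : 𝕜} (hx : x ∈ spectrum 𝕜 (a : A)) (κ : ℤ) :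
    x ^ κ ∈ spectrum 𝕜 (↑(a ^ κ) : A) := by
  have pow_mem (m : ℕ) : x ^ m ∈ spectrum 𝕜 (↑(a ^ m) : A) := by
    simpa only [Units.val_pow_eq_pow_val] using spectrum.pow_mem_pow (a : A) m hx
  obtain ⟨m, rfl | rfl⟩ := κ.eq_nat_or_neg
  · simpa only [zpow_natCast] using pow_mem m
  · simpa only [zpow_neg, zpow_natCast, spectrum.inv₀_mem_inv_iff] using pow_mem m

theorem isOfFinOrder_of_spectrum_zpow_subset {a : Aˣ} (hfin : (spectrum 𝕜 (a : A)).Finite) {κ : ℤ}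
    (hκ : 2 ≤ |κ|) (hsub : spectrum 𝕜 (↑(a ^ κ) : A) ⊆ spectrum 𝕜 (a : A)) {x : 𝕜}
    (hx : x ∈ spectrum 𝕜 (a : A)) : IsOfFinOrder x := by
  lift x to 𝕜ˣ using (spectrum.ne_zero_of_mem_of_unit hx).isUnit
  have units_finite : (Units.val ⁻¹' spectrum 𝕜 (a : A)).Finite :=
    hfin.preimage Units.val_injective.injOn
  have units_mapsTo : Set.MapsTo (· ^ κ) (Units.val ⁻¹' spectrum 𝕜 (a : A))
      (Units.val ⁻¹' spectrum 𝕜 (a : A)) := fun u hu => by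
    simpa only [Set.mem_preimage, Units.val_zpow_eq_zpow_val] using
      hsub (zpow_mem_spectrum_zpow hu κ)
  exact Units.isOfFinOrder_val.mpr (isOfFinOrder_of_mapsTo_zpow units_finite hκ units_mapsTo hx)

theorem eigenvalues_rootOfUnity_of_conj_pow_general {a p : Aˣ}
    (hfin : (spectrum 𝕜 (a : A)).Finite) {κ : ℤ} (hκ : 2 ≤ |κ|) (h : p * a * p⁻¹ = a ^ κ) {x : 𝕜}
    (hx : x ∈ spectrum 𝕜 (a : A)) : IsOfFinOrder x := by
  refine isOfFinOrder_of_spectrum_zpow_subset hfin hκ (Eq.subset ?_) hx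
  rw [← h, Units.val_mul, Units.val_mul, spectrum.units_conjugate]

end Spectrum

/-- If `M ∈ GL_n(ℂ)` is conjugate (inside `GL_n(ℂ)`) to `M^κ` for some integer `κ` with
`|κ| ≥ 2`, then every eigenvalue of `M` is a root of unity. -/
theorem eigenvalues_rootOfUnity_of_conj_pow (n : ℕ) (hn : 1 ≤ n)
    (M P : GL (Fin n) ℂ) (κ : ℤ) (hκ : 2 ≤ |κ|)
    (h : P * M * P⁻¹ = M ^ κ)
    (lam : ℂ) (hlam : ¬ IsUnit ((M : Matrix (Fin n) (Fin n) ℂ) - lam • 1)) :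
    ∃ m : ℕ, 0 < m ∧ lam ^ m = 1 := by
  rw [← Algebra.algebraMap_eq_smul_one, IsUnit.sub_iff, ← spectrum.mem_iff] at hlam
  exact isOfFinOrder_iff_pow_eq_one.mp <|
    eigenvalues_rootOfUnity_of_conj_pow_general (Matrix.finite_spectrum _) hκ h hlam
end

section
/- Let A₁ and A₂ be finite-dimensional unital ℚ-algebras with dim_ℚ A₁ = dim_ℚ A₂. Let M ⊆ A₁ be a multiplicative submonoid (containing 1) whose ℚ-linear span is all of A₁. Suppose 𝔟 : A₁ → A₂ is an injective ℚ-linear map and 𝔱 : M → A₂ is a map such that 𝔟(a·x) = 𝔱(a)·𝔟(x) for all a ∈ M and x ∈ A₁. Then there exists a ℚ-algebra isomorphism φ : A₁ → A₂ such that φ(a) = 𝔱(a) for all a ∈ M. -/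
/-!
The elements `a` for which some `c` satisfies `f (a * x) = c * f x` for all `x` form a subalgebra,
so it suffices to have such a `c` on generators. If `f u = 1`, then `c = f (a * u)`; hence
`φ a = f (a * u)` is multiplicative and unital, and `f (a * x) = φ a * f x`. Taking `x = 1` gives
`f a = φ a * f 1`, so `φ` is injective when `f` is. Taking `x = 1`, `a = u` shows that `f 1` is left
invertible; in a Dedekind-finite algebra, such as a Noetherian one, it is then a unit, and `φ` is
surjective because its range, multiplied by that unit, is everything.
-/

section Intertwined

variable {R A B : Type*} [CommSemiring R] [Semiring A] [Algebra R A] [Semiring B] [Algebra R B]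

/-- The subalgebra of those `a : A` such that `f` intertwines left multiplication by `a` with left
multiplication by some element of `B`. The multiplier in `B` is not recorded: it is determined
by `a` as soon as `1` lies in the range of `f`. -/
def intertwinedSubalgebra (f : A →ₗ[R] B) : Subalgebra R A where
  carrier := {a | ∃ c : B, ∀ x, f (a * x) = c * f x}
  mul_mem' := by
    rintro a a' ⟨c, hc⟩ ⟨c', hc'⟩
    exact ⟨c * c', fun x ↦ by rw [mul_assoc, hc, hc', mul_assoc]⟩
  add_mem' := by
    rintro a a' ⟨c, hc⟩ ⟨c', hc'⟩
    exact ⟨c + c', fun x ↦ by rw [add_mul, map_add, hc, hc', add_mul]⟩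
  algebraMap_mem' r := ⟨algebraMap R B r, fun x ↦ by simp only [← Algebra.smul_def, map_smul]⟩

variable {f : A →ₗ[R] B} {u : A}

theorem eq_map_mul_of_forall_map_mul {a : A} {c : B} (hc : ∀ x, f (a * x) = c * f x)
    (hu : f u = 1) : c = f (a * u) := by
  rw [hc, hu, mul_one]

theorem map_mul_mul_map_of_mem_intertwinedSubalgebra {a : A} (ha : a ∈ intertwinedSubalgebra f)
    (hu : f u = 1) (x : A) : f (a * u) * f x = f (a * x) := by
  obtain ⟨c, hc⟩ := ha
  rw [← eq_map_mul_of_forall_map_mul hc hu, hc]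

/-- The algebra homomorphism `a ↦ f (a * u)`, where `f u = 1`, sending `a` to the element of `B`
whose left multiplication corresponds under `f` to left multiplication by `a`. -/
def intertwinedAlgHom (hf : intertwinedSubalgebra f = ⊤) (hu : f u = 1) : A →ₐ[R] B :=
  AlgHom.ofLinearMap (f ∘ₗ LinearMap.mulRight R u) (by simp [hu]) fun a a' ↦ by
    have ha : a ∈ intertwinedSubalgebra f := hf ▸ Algebra.mem_top
    simp [map_mul_mul_map_of_mem_intertwinedSubalgebra ha hu, mul_assoc]

theorem intertwinedAlgHom_apply (hf : intertwinedSubalgebra f = ⊤) (hu : f u = 1) (a : A) :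
    intertwinedAlgHom hf hu a = f (a * u) :=
  rfl

theorem intertwinedAlgHom_mul_map_one (hf : intertwinedSubalgebra f = ⊤) (hu : f u = 1) (a : A) :
    intertwinedAlgHom hf hu a * f 1 = f a := by
  have ha : a ∈ intertwinedSubalgebra f := hf ▸ Algebra.mem_top
  rw [intertwinedAlgHom_apply, map_mul_mul_map_of_mem_intertwinedSubalgebra ha hu, mul_one]

theorem intertwinedAlgHom_injective (hf : intertwinedSubalgebra f = ⊤) (hu : f u = 1)
    (hinj : Function.Injective f) : Function.Injective (intertwinedAlgHom hf hu) := by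
  intro a a' h
  apply hinj
  rw [← intertwinedAlgHom_mul_map_one hf hu a, h, intertwinedAlgHom_mul_map_one]

theorem intertwinedAlgHom_surjective [IsDedekindFiniteMonoid B]
    (hf : intertwinedSubalgebra f = ⊤) (hu : f u = 1) (hsurj : Function.Surjective f) :
    Function.Surjective (intertwinedAlgHom hf hu) := by
  intro c
  have hunit : IsUnit (f 1) :=
    .of_mul_eq_one_right _ ((intertwinedAlgHom_mul_map_one hf hu u).trans hu)
  obtain ⟨a, ha⟩ := hsurj (c * f 1)
  exact ⟨a, hunit.mul_right_cancel ((intertwinedAlgHom_mul_map_one hf hu a).trans ha)⟩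

end Intertwined

theorem exists_algEquiv_extending_general {R A B : Type*} [CommSemiring R] [Semiring A]
    [Algebra R A] [Semiring B] [Algebra R B] [IsDedekindFiniteMonoid B] {s : Set A}
    (hs : Algebra.adjoin R s = ⊤) {f : A →ₗ[R] B} (hf : Function.Bijective f) {t : s → B}
    (ht : ∀ (a : s) (x : A), f (a * x) = t a * f x) :
    ∃ φ : A ≃ₐ[R] B, ∀ a : s, φ a = t a := by
  obtain ⟨u, hu⟩ := hf.surjective 1
  have htop : intertwinedSubalgebra f = ⊤ :=
    top_le_iff.1 <| hs ▸ Algebra.adjoin_le fun a ha ↦ ⟨t ⟨a, ha⟩, ht ⟨a, ha⟩⟩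
  exact ⟨.ofBijective (intertwinedAlgHom htop hu) ⟨intertwinedAlgHom_injective htop hu hf.injective,
    intertwinedAlgHom_surjective htop hu hf.surjective⟩,
    fun a ↦ (eq_map_mul_of_forall_map_mul (ht a) hu).symm⟩

/-- Let `A₁`, `A₂` be finite-dimensional unital `ℚ`-algebras of the same dimension, and let
`M ⊆ A₁` be a multiplicative submonoid whose `ℚ`-linear span is all of `A₁`.  If
`𝔟 : A₁ → A₂` is an injective `ℚ`-linear map and `𝔱 : M → A₂` satisfies
`𝔟(a x) = 𝔱(a) 𝔟(x)` for all `a ∈ M`, `x ∈ A₁`, then there is a `ℚ`-algebra isomorphism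
`φ : A₁ ≃ A₂` with `φ(a) = 𝔱(a)` for all `a ∈ M`. -/
theorem exists_algEquiv_extending {A₁ A₂ : Type*} [Ring A₁] [Algebra ℚ A₁]
    [Ring A₂] [Algebra ℚ A₂] [FiniteDimensional ℚ A₁] [FiniteDimensional ℚ A₂]
    (hdim : Module.finrank ℚ A₁ = Module.finrank ℚ A₂)
    (M : Submonoid A₁) (hspan : Submodule.span ℚ (M : Set A₁) = ⊤)
    (𝔟 : A₁ →ₗ[ℚ] A₂) (hinj : Function.Injective 𝔟)
    (𝔱 : M → A₂)
    (hcompat : ∀ (a : M) (x : A₁), 𝔟 ((a : A₁) * x) = 𝔱 a * 𝔟 x) :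
    ∃ φ : A₁ ≃ₐ[ℚ] A₂, ∀ a : M, φ (a : A₁) = 𝔱 a := by
  have : IsNoetherianRing A₂ := .of_finite ℚ A₂
  have hadjoin : Algebra.adjoin ℚ (M : Set A₁) = ⊤ :=
    Algebra.toSubmodule_eq_top.1 <| top_le_iff.1 <| hspan ▸ Algebra.span_le_adjoin ℚ _
  exact exists_algEquiv_extending_general hadjoin
    ⟨hinj, (LinearMap.injective_iff_surjective_of_finrank_eq_finrank hdim).1 hinj⟩ hcompat
end

section
/- For i = 1, 2, let A_i be a unital ℚ-algebra and let M_i be a multiplicative submonoid of the unit group A_iˣ. Let ⟨M_i⟩ denote the subgroup of A_iˣ generated by M_i, and assume condition (N): for every g ∈ ⟨M_i⟩, one has g ∈ M_i if and only if the element g (viewed in A_i) is integral over ℤ. Suppose φ₁ : A₁ → A₂ and φ₂ : A₂ → A₁ are ℚ-algebra isomorphisms with φ₁(⟨M₁⟩) ⊆ ⟨M₂⟩ and φ₂(⟨M₂⟩) ⊆ ⟨M₁⟩. If condition (S) holds, namely every ℚ-algebra automorphism ψ of A₁ with ψ(M₁) ⊆ M₁ satisfies ψ(M₁) = M₁, then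 φ₁(M₁) = M₂ and φ₂(M₂) = M₁. -/
/-!
Ring homomorphisms preserve integrality, so condition (N) turns `φ₁⟨M₁⟩ ⊆ ⟨M₂⟩` and
`φ₂⟨M₂⟩ ⊆ ⟨M₁⟩` into `φ₁(M₁) ⊆ M₂` and `φ₂(M₂) ⊆ M₁`. Hence `ψ = φ₂ ∘ φ₁` maps `M₁` into
itself, and (S) closes up the chain `ψ(M₁) ⊆ φ₂(M₂) ⊆ M₁ = ψ(M₁)`. Cancelling the injective `φ₂` in
`φ₂(φ₁(M₁)) = φ₂(M₂)` gives `φ₁(M₁) = M₂`.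
-/

section Sandwich

variable {G H : Type*} [MulOneClass G] [MulOneClass H] {M : Submonoid G} {N : Submonoid H}
  {f : G →* H} {g : H →* G}

theorem submonoid_map_eq_of_le_map_map (hf : M.map f ≤ N) (hg : N.map g ≤ M)
    (hgf : M ≤ (M.map f).map g) : N.map g = M :=
  hg.antisymm (hgf.trans (Submonoid.monotone_map hf))

theorem submonoid_map_eq_of_le_map_map_of_injective (hf : M.map f ≤ N) (hg : N.map g ≤ M)
    (hgf : M ≤ (M.map f).map g) (hinj : Function.Injective g) : M.map f = N :=
  hf.antisymm ((Submonoid.map_le_map_iff_of_injective hinj).1 (hg.trans hgf))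

end Sandwich

section Integral

variable {R : Type*} [CommRing R]

theorem submonoid_map_units_le_of_isIntegral {A B : Type*} [Ring A] [Algebra R A]
    [Ring B] [Algebra R B] {M : Submonoid Aˣ} {N : Submonoid Bˣ} (f : A →ₐ[R] B)
    (hM : ∀ g ∈ M, IsIntegral R (g : A))
    (hN : ∀ g ∈ Subgroup.closure (N : Set Bˣ), IsIntegral R (g : B) → g ∈ N)
    (hf : Subgroup.map (Units.map (f : A →* B)) (Subgroup.closure (M : Set Aˣ)) ≤
      Subgroup.closure (N : Set Bˣ)) :
    Submonoid.map (Units.map (f : A →* B)) M ≤ N := by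
  rintro _ ⟨g, hg, rfl⟩
  exact hN _ (hf (Subgroup.mem_map_of_mem _ (Subgroup.subset_closure hg))) ((hM g hg).map f)

theorem map_submonoid_units_eq_general {K A₁ A₂ : Type*} [CommSemiring K] [Algebra R K]
    [Ring A₁] [Algebra R A₁] [Algebra K A₁] [IsScalarTower R K A₁]
    [Ring A₂] [Algebra R A₂] [Algebra K A₂] [IsScalarTower R K A₂]
    (M₁ : Submonoid A₁ˣ) (M₂ : Submonoid A₂ˣ)
    (hN₁ : ∀ g ∈ Subgroup.closure (M₁ : Set A₁ˣ), g ∈ M₁ ↔ IsIntegral R (g : A₁))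
    (hN₂ : ∀ g ∈ Subgroup.closure (M₂ : Set A₂ˣ), g ∈ M₂ ↔ IsIntegral R (g : A₂))
    (φ₁ : A₁ ≃ₐ[K] A₂) (φ₂ : A₂ ≃ₐ[K] A₁)
    (h₁ : Subgroup.map (Units.map (φ₁ : A₁ →* A₂)) (Subgroup.closure (M₁ : Set A₁ˣ)) ≤
      Subgroup.closure (M₂ : Set A₂ˣ))
    (h₂ : Subgroup.map (Units.map (φ₂ : A₂ →* A₁)) (Subgroup.closure (M₂ : Set A₂ˣ)) ≤
      Subgroup.closure (M₁ : Set A₁ˣ))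
    (hS : ∀ ψ : A₁ ≃ₐ[K] A₁,
      Submonoid.map (Units.map (ψ : A₁ →* A₁)) M₁ ≤ M₁ →
      Submonoid.map (Units.map (ψ : A₁ →* A₁)) M₁ = M₁) :
    Submonoid.map (Units.map (φ₁ : A₁ →* A₂)) M₁ = M₂ ∧
      Submonoid.map (Units.map (φ₂ : A₂ →* A₁)) M₂ = M₁ := by
  have map₁_le : M₁.map (Units.map (φ₁ : A₁ →* A₂)) ≤ M₂ :=
    submonoid_map_units_le_of_isIntegral (φ₁.restrictScalars R : A₁ →ₐ[R] A₂)
      (fun g hg => (hN₁ g (Subgroup.subset_closure hg)).1 hg) (fun g hg => (hN₂ g hg).2) h₁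
  have map₂_le : M₂.map (Units.map (φ₂ : A₂ →* A₁)) ≤ M₁ :=
    submonoid_map_units_le_of_isIntegral (φ₂.restrictScalars R : A₂ →ₐ[R] A₁)
      (fun g hg => (hN₂ g (Subgroup.subset_closure hg)).1 hg) (fun g hg => (hN₁ g hg).2) h₂
  have map_map : (M₁.map (Units.map (φ₁ : A₁ →* A₂))).map (Units.map (φ₂ : A₂ →* A₁)) =
      M₁.map (Units.map ((φ₁.trans φ₂ : A₁ ≃ₐ[K] A₁) : A₁ →* A₁)) :=
    Submonoid.map_map _ _ _
  have map_trans_le : M₁.map (Units.map ((φ₁.trans φ₂ : A₁ ≃ₐ[K] A₁) : A₁ →* A₁)) ≤ M₁ :=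
    map_map.ge.trans ((Submonoid.monotone_map map₁_le).trans map₂_le)
  have le_map_map := (map_map.trans (hS _ map_trans_le)).ge
  exact ⟨submonoid_map_eq_of_le_map_map_of_injective map₁_le map₂_le le_map_map
      (Units.map_injective φ₂.injective),
    submonoid_map_eq_of_le_map_map map₁_le map₂_le le_map_map⟩

end Integral

/-- Let `M_i` be a submonoid of the unit group of a unital `ℚ`-algebra `A_i` satisfying
condition (N): an element of the subgroup `⟨M_i⟩` generated by `M_i` belongs to `M_i` iff it
is integral over `ℤ`.  If `φ₁ : A₁ ≃ A₂` and `φ₂ : A₂ ≃ A₁` are `ℚ`-algebra isomorphisms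
with `φ₁(⟨M₁⟩) ⊆ ⟨M₂⟩` and `φ₂(⟨M₂⟩) ⊆ ⟨M₁⟩`, and condition (S) holds (every `ℚ`-algebra
automorphism `ψ` of `A₁` with `ψ(M₁) ⊆ M₁` satisfies `ψ(M₁) = M₁`), then `φ₁(M₁) = M₂` and
`φ₂(M₂) = M₁`. -/
theorem map_submonoid_units_eq {A₁ A₂ : Type*} [Ring A₁] [Algebra ℚ A₁]
    [Ring A₂] [Algebra ℚ A₂]
    (M₁ : Submonoid A₁ˣ) (M₂ : Submonoid A₂ˣ)
    (hN₁ : ∀ g ∈ Subgroup.closure (M₁ : Set A₁ˣ), g ∈ M₁ ↔ IsIntegral ℤ ((g : A₁ˣ) : A₁))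
    (hN₂ : ∀ g ∈ Subgroup.closure (M₂ : Set A₂ˣ), g ∈ M₂ ↔ IsIntegral ℤ ((g : A₂ˣ) : A₂))
    (φ₁ : A₁ ≃ₐ[ℚ] A₂) (φ₂ : A₂ ≃ₐ[ℚ] A₁)
    (h₁ : Subgroup.map (Units.map (φ₁ : A₁ →* A₂)) (Subgroup.closure (M₁ : Set A₁ˣ)) ≤
      Subgroup.closure (M₂ : Set A₂ˣ))
    (h₂ : Subgroup.map (Units.map (φ₂ : A₂ →* A₁)) (Subgroup.closure (M₂ : Set A₂ˣ)) ≤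
      Subgroup.closure (M₁ : Set A₁ˣ))
    (hS : ∀ ψ : A₁ ≃ₐ[ℚ] A₁,
      Submonoid.map (Units.map (ψ : A₁ →* A₁)) M₁ ≤ M₁ →
      Submonoid.map (Units.map (ψ : A₁ →* A₁)) M₁ = M₁) :
    Submonoid.map (Units.map (φ₁ : A₁ →* A₂)) M₁ = M₂ ∧
      Submonoid.map (Units.map (φ₂ : A₂ →* A₁)) M₂ = M₁ :=
  map_submonoid_units_eq_general M₁ M₂ hN₁ hN₂ φ₁ φ₂ h₁ h₂ hS
end

section
/- Let A be a commutative finite-dimensional unital ℚ-algebra, and let a_1, …, a_k be units of A. For a ∈ A let m_a : A → A denote the ℚ-linear map of multiplication by a, and suppose that for each i, d_i := det(m_{a_i}) is a (nonzero) integer. Assume that for every i there exists a prime number p such that p divides d_i but p does not divide d_j for all j ≠ i. If ψ is a ℚ-algebra automorphism of A that maps the multiplicative submonoid of A generated by {a_1, …, a_k} into itself, then ψ(a_i) = a_i for every i. -/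
/-!
The norm `x ↦ det m_x` is multiplicative and invariant under algebra automorphisms, so if
`ψ (a i)` is a word in the `a j`, then `d i` is the corresponding word in the `d j`.  A letter
`j ≠ i` cannot occur, since the prime separating `d j` from the others would divide `d i`.  Hence
the word is a power of the letter `i`, and `d i = d i ^ n` with `d i` neither zero nor a unit
forces `n = 1`.
-/

section Words

variable {ι N : Type*} [CommMonoidWithZero N] [IsCancelMulZero N] {d : ι → N} {i : ι}

theorem eq_singleton_of_prod_map_eq (hne : d i ≠ 0) (hunit : ¬ IsUnit (d i))
    (hdvd : ∀ j, j ≠ i → ¬ d j ∣ d i) {l : List ι} (hl : (l.map d).prod = d i) : l = [i] := by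
  have hmem : ∀ j ∈ l, j = i := fun j hj ↦ by
    by_contra hji
    exact hdvd j hji (hl ▸ List.dvd_prod (List.mem_map_of_mem hj))
  obtain ⟨n, rfl⟩ : ∃ n, l = List.replicate n i := ⟨_, List.eq_replicate_of_mem hmem⟩
  have hpow : d i ^ n = d i ^ 1 := by
    rwa [pow_one, ← List.prod_replicate, ← List.map_replicate]
  rw [pow_injective_of_not_isUnit hunit hne hpow, List.replicate_one]

theorem eq_of_mem_closure_range_of_map_eq {M K : Type*} [Monoid M] [Monoid K] {φ : N →* K}
    (hφ : Function.Injective φ) (f : M →* K) {a : ι → M} (hd : ∀ j, φ (d j) = f (a j))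
    (hne : d i ≠ 0) (hunit : ¬ IsUnit (d i)) (hdvd : ∀ j, j ≠ i → ¬ d j ∣ d i) {x : M}
    (hx : x ∈ Submonoid.closure (Set.range a)) (hfx : f x = f (a i)) : x = a i := by
  rw [← FreeMonoid.mrange_lift] at hx
  obtain ⟨l, rfl⟩ := hx
  have hword : FreeMonoid.lift d l = d i := hφ <| calc
    φ (FreeMonoid.lift d l) = FreeMonoid.lift (φ ∘ d) l := FreeMonoid.hom_map_lift φ d l
    _ = FreeMonoid.lift (f ∘ a) l := by rw [show φ ∘ d = f ∘ a from funext hd]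
    _ = f (FreeMonoid.lift a l) := (FreeMonoid.hom_map_lift f a l).symm
    _ = φ (d i) := hfx.trans (hd i).symm
  rw [FreeMonoid.lift_apply] at hword ⊢
  rw [eq_singleton_of_prod_map_eq hne hunit hdvd hword, List.map_singleton, List.prod_singleton]

end Words

theorem algAut_fixes_generators_general {ι D K A : Type*} [CommRing D] [IsDomain D] [CommRing K]
    [Algebra D K] [FaithfulSMul D K] [Ring A] [Algebra K A] [Module.Free K A] [Module.Finite K A]
    (a : ι → A) (d : ι → D) (hd : ∀ i, algebraMap D K (d i) = Algebra.norm K (a i))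
    (hne : ∀ i, d i ≠ 0) (hp : ∀ i, ∃ p : D, ¬ IsUnit p ∧ p ∣ d i ∧ ∀ j, j ≠ i → ¬ p ∣ d j)
    (ψ : A ≃ₐ[K] A) (hψ : ∀ i, ψ (a i) ∈ Submonoid.closure (Set.range a)) (i : ι) :
    ψ (a i) = a i := by
  have hunit : ¬ IsUnit (d i) := by
    obtain ⟨p, hpu, hpi, -⟩ := hp i
    exact not_isUnit_of_not_isUnit_dvd hpu hpi
  have hdvd : ∀ j, j ≠ i → ¬ d j ∣ d i := by
    intro j hji hdvd
    obtain ⟨p, -, hpj, hpne⟩ := hp j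
    exact hpne i hji.symm (hpj.trans hdvd)
  exact eq_of_mem_closure_range_of_map_eq (φ := (algebraMap D K : D →* K))
    (FaithfulSMul.algebraMap_injective D K) (Algebra.norm K) hd (hne i) hunit hdvd (hψ i)
    (Algebra.norm_eq_of_algEquiv ψ (a i))

/-- Let `A` be a commutative finite-dimensional unital `ℚ`-algebra and `a₁, …, a_k ∈ Aˣ`
units whose multiplication maps have integer determinants `d_i`, such that each `d_i` is
divisible by a prime not dividing any other `d_j`.  Then every `ℚ`-algebra automorphism of
`A` mapping the submonoid generated by the `a_i` into itself fixes each `a_i`. -/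
theorem algAut_fixes_generators {A : Type*} [CommRing A] [Algebra ℚ A]
    [FiniteDimensional ℚ A] {k : ℕ} (a : Fin k → Aˣ) (d : Fin k → ℤ)
    (hd : ∀ i, (d i : ℚ) = LinearMap.det (LinearMap.mulLeft ℚ ((a i : A))))
    (hp : ∀ i, ∃ p : ℕ, p.Prime ∧ (p : ℤ) ∣ d i ∧ ∀ j, j ≠ i → ¬ (p : ℤ) ∣ d j)
    (ψ : A ≃ₐ[ℚ] A)
    (hψ : ∀ x ∈ Submonoid.closure (Set.range (fun i => ((a i : A)))),
      ψ x ∈ Submonoid.closure (Set.range (fun i => ((a i : A))))) :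
    ∀ i, ψ (a i : A) = (a i : A) := by
  have hne : ∀ i, d i ≠ 0 := fun i ↦
    Int.cast_ne_zero.1 (hd i ▸ ((a i).isUnit.map (Algebra.norm ℚ)).ne_zero)
  exact algAut_fixes_generators_general (fun i ↦ (a i : A)) d hd hne
    (fun i ↦ let ⟨p, hprime, h⟩ := hp i; ⟨p, (Nat.prime_iff_prime_int.1 hprime).not_isUnit, h⟩)
    ψ fun i ↦ hψ _ (Submonoid.subset_closure ⟨i, rfl⟩)
end

section
/- Let A be a commutative finite-dimensional unital ℚ-algebra, and let a_1, …, a_k be units of A, each integral over ℤ. Suppose that for each i, d_i := det(m_{a_i}) is an integer, where m_a denotes multiplication by a, and that for every i there exists a prime number p such that p divides d_i but p does not divide d_j for all j ≠ i. Then for all integers n_1, …, n_k, the element a_1^{n_1} ⋯ a_k^{n_k} (powers with negative exponents taken in the unit group Aˣ) is integral over ℤ if and only if n_i ≥ 0 for all i. -/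
/-!
If a polynomial `p` kills a matrix `M`, then `X - M` divides `p` as polynomials with matrix
coefficients, so taking determinants shows that the characteristic polynomial of `M` divides a
power of `p`. Hence the characteristic polynomial, and in particular the determinant, of an
integral matrix is integral, and so is the norm of an integral element.

Applied to `∏ aⱼ ^ nⱼ`, this shows that `∏ dⱼ ^ nⱼ` is an element `m` of the base ring. Clearing
negative exponents gives `m * ∏ dⱼ ^ nⱼ⁻ = ∏ dⱼ ^ nⱼ⁺`. If `nᵢ < 0`, then a prime containing `dᵢ`
and no other `dⱼ` contains the left-hand side but no factor of the right-hand side.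
-/

section CharpolyIntegrality

open Polynomial

variable {R S ι : Type*} [CommRing R] [CommRing S] [Algebra R S] [Fintype ι] [DecidableEq ι]

theorem sub_dvd_aeval_sub_of_commute {B : Type*} [Ring B] [Algebra S B] {x y : B}
    (hxy : Commute x y) (p : S[X]) : x - y ∣ aeval x p - aeval y p := by
  simp_rw [aeval_eq_sum_range, ← Finset.sum_sub_distrib, ← smul_sub]
  exact Finset.dvd_sum fun i _ => dvd_smul_of_dvd _ (hxy.sub_dvd_pow_sub_pow i)

theorem charpoly_dvd_pow_card_of_aeval_eq_zero {M : Matrix ι ι S} {p : S[X]}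
    (hp : aeval M p = 0) : M.charpoly ∣ p ^ Fintype.card ι := by
  let x : Matrix ι ι S[X] := algebraMap S[X] _ X
  let y : Matrix ι ι S[X] := (CAlgHom (R := S)).mapMatrix M
  have hx : aeval x p = p • 1 := by
    rw [aeval_algebraMap_apply, aeval_X_left_apply, Algebra.algebraMap_eq_smul_one]
  have hy : aeval y p = 0 := by
    rw [aeval_algHom_apply, hp, map_zero]
  have hdvd : M.charmatrix ∣ aeval x p - aeval y p :=
    sub_dvd_aeval_sub_of_commute (Algebra.commutes X y) p
  rw [hx, hy, sub_zero] at hdvd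
  obtain ⟨Q, hQ⟩ := hdvd
  refine ⟨Q.det, ?_⟩
  rw [Matrix.charpoly, ← Matrix.det_mul, ← hQ, Matrix.det_smul, Matrix.det_one, mul_one]

theorem isIntegral_charpoly_coeff {M : Matrix ι ι S} (hM : IsIntegral R M) (i : ℕ) :
    IsIntegral R (M.charpoly.coeff i) := by
  obtain ⟨p, hp, hpM⟩ := hM
  refine isIntegral_coeff_of_dvd (p ^ Fintype.card ι) _ (hp.pow _) M.charpoly_monic ?_ i
  rw [Polynomial.map_pow]
  apply charpoly_dvd_pow_card_of_aeval_eq_zero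
  rwa [aeval_map_algebraMap, aeval_def]

theorem isIntegral_matrix_det {M : Matrix ι ι S} (hM : IsIntegral R M) : IsIntegral R M.det := by
  rw [Matrix.det_eq_sign_charpoly_coeff]
  exact (isIntegral_one.neg.pow _).mul (isIntegral_charpoly_coeff hM 0)

theorem isIntegral_norm_of_free {A : Type*} [Ring A] [Algebra R A] [Algebra S A]
    [IsScalarTower R S A] [Module.Free S A] [Module.Finite S A] {x : A} (hx : IsIntegral R x) :
    IsIntegral R (Algebra.norm S x) := by
  classical
  let b := Module.Free.chooseBasis S A
  rw [Algebra.norm_eq_matrix_det b]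
  exact isIntegral_matrix_det (hx.map ((Algebra.leftMulMatrix b).restrictScalars R))

end CharpolyIntegrality

section Exponents

variable {ι : Type*} [Fintype ι]

theorem prod_zpow_mul_prod_pow_toNat_neg {G : Type*} [CommGroup G] (u : ι → G) (n : ι → ℤ) :
    (∏ i, u i ^ n i) * ∏ i, u i ^ (-n i).toNat = ∏ i, u i ^ (n i).toNat := by
  rw [← Finset.prod_mul_distrib]
  refine Finset.prod_congr rfl fun i _ => ?_
  rw [← zpow_natCast, ← zpow_natCast, ← zpow_add]
  congr 1
  lia

theorem exponent_nonneg_of_prod_zpow_eq_algebraMap {R S : Type*} [CommRing R] [CommRing S]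
    [Algebra R S] (hinj : Function.Injective (algebraMap R S)) {u : ι → Sˣ} {d : ι → R}
    (hd : ∀ j, algebraMap R S (d j) = u j) {n : ι → ℤ} {m : R}
    (hm : algebraMap R S m = (∏ j, u j ^ n j : Sˣ)) {P : Ideal R} (hP : P.IsPrime)
    {i : ι} (hi : d i ∈ P) (hne : ∀ j, j ≠ i → d j ∉ P) : 0 ≤ n i := by
  by_contra! hneg
  have hclear : m * ∏ j, d j ^ (-n j).toNat = ∏ j, d j ^ (n j).toNat := by
    apply hinj
    simpa [hm, hd] using congrArg Units.val (prod_zpow_mul_prod_pow_toNat_neg u n)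
  have hleft : m * ∏ j, d j ^ (-n j).toNat ∈ P :=
    P.mul_mem_left m <| P.prod_mem (Finset.mem_univ i) <| P.pow_mem_of_mem hi _ (by lia)
  rw [hclear, hP.prod_mem_iff] at hleft
  obtain ⟨j, -, hj⟩ := hleft
  obtain rfl : j = i := by_contra fun hji => hne j hji (hP.mem_of_pow_mem _ hj)
  rw [Int.toNat_of_nonpos hneg.le, pow_zero] at hj
  exact hP.one_notMem hj

theorem isIntegral_prod_zpow_of_nonneg {R A : Type*} [CommRing R] [CommRing A] [Algebra R A]
    {a : ι → Aˣ} (ha : ∀ i, IsIntegral R (a i : A)) {n : ι → ℤ} (hn : ∀ i, 0 ≤ n i) :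
    IsIntegral R ((∏ i, a i ^ n i : Aˣ) : A) := by
  rw [Units.coe_prod]
  refine IsIntegral.prod _ fun i _ => ?_
  lift n to ι → ℕ using hn
  rw [zpow_natCast, Units.val_pow_eq_pow_val]
  exact (ha i).pow (n i)

end Exponents

theorem isIntegral_prod_zpow_iff_nonneg_general {R S A ι : Type*} [CommRing R] [CommRing S]
    [CommRing A] [Algebra R S] [Algebra R A] [Algebra S A] [IsScalarTower R S A]
    [IsIntegrallyClosedIn R S] [Module.Free S A] [Module.Finite S A] [Fintype ι] (a : ι → Aˣ)
    (hint : ∀ i, IsIntegral R (a i : A)) (d : ι → R)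
    (hd : ∀ i, algebraMap R S (d i) = Algebra.norm S (a i : A))
    (hP : ∀ i, ∃ P : Ideal R, P.IsPrime ∧ d i ∈ P ∧ ∀ j, j ≠ i → d j ∉ P) (n : ι → ℤ) :
    IsIntegral R ((∏ i, a i ^ n i : Aˣ) : A) ↔ ∀ i, 0 ≤ n i := by
  refine ⟨fun h i => ?_, isIntegral_prod_zpow_of_nonneg hint⟩
  let normUnits : Aˣ →* Sˣ := Units.map (Algebra.norm S)
  obtain ⟨m, hm⟩ := IsIntegrallyClosedIn.isIntegral_iff.mp (isIntegral_norm_of_free (S := S) h)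
  have hm_prod : algebraMap R S m = (∏ j, normUnits (a j) ^ n j : Sˣ) := by
    simp_rw [hm, ← map_zpow, ← map_prod, normUnits, Units.coe_map]
  obtain ⟨P, hPprime, hi, hne⟩ := hP i
  exact exponent_nonneg_of_prod_zpow_eq_algebraMap
    (IsIntegralClosure.algebraMap_injective R R S) hd hm_prod hPprime hi hne

/-- Let `A` be a commutative finite-dimensional unital `ℚ`-algebra and `a₁, …, a_k ∈ Aˣ`
units, each integral over `ℤ`, whose multiplication maps have integer determinants `d_i`,
such that each `d_i` is divisible by a prime not dividing any other `d_j`.  Then for all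
integers `n₁, …, n_k`, the element `a₁^{n₁} ⋯ a_k^{n_k}` is integral over `ℤ` iff all
`n_i` are nonnegative. -/
theorem isIntegral_prod_zpow_iff_nonneg {A : Type*} [CommRing A] [Algebra ℚ A]
    [FiniteDimensional ℚ A] {k : ℕ} (a : Fin k → Aˣ)
    (hint : ∀ i, IsIntegral ℤ ((a i : A)))
    (d : Fin k → ℤ)
    (hd : ∀ i, (d i : ℚ) = LinearMap.det (LinearMap.mulLeft ℚ ((a i : A))))
    (hp : ∀ i, ∃ p : ℕ, p.Prime ∧ (p : ℤ) ∣ d i ∧ ∀ j, j ≠ i → ¬ (p : ℤ) ∣ d j)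
    (n : Fin k → ℤ) :
    IsIntegral ℤ (((∏ i, (a i) ^ (n i) : Aˣ) : A)) ↔ ∀ i, 0 ≤ n i := by
  refine isIntegral_prod_zpow_iff_nonneg_general a hint d hd (fun i => ?_) n
  obtain ⟨p, hp, hpd⟩ := hp i
  exact ⟨Ideal.span {(p : ℤ)},
    (Ideal.span_singleton_prime (mod_cast hp.ne_zero)).mpr (Nat.prime_iff_prime_int.mp hp),
    by simpa only [Ideal.mem_span_singleton] using hpd⟩
end

section
/- Let A be a commutative finite-dimensional unital ℚ-algebra, and let a_1, …, a_k be units of A. Suppose that for each i, d_i := det(m_{a_i}) is an integer, where m_a denotes multiplication by a, and that for every i there exists a prime number p such that p divides d_i but p does not divide d_j for all j ≠ i. Then a_1, …, a_k are multiplicatively independent: if a_1^{n_1} ⋯ a_k^{n_k} = 1 for integers n_1, …, n_k (powers taken in the unit group Aˣ), then n_1 = ⋯ = n_k = 0. -/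
/-!
The map `x ↦ det (m_x)` is multiplicative. Separating positive from negative exponents in
`∏ a_i ^ n_i = 1` and taking determinants gives `∏ d_i ^ n_i⁺ = ∏ d_i ^ n_i⁻`, an identity with
natural exponents which holds already in `ℤ`. A prime dividing `d_i` and no other `d_j` divides
the left side exactly when `n_i⁺ ≠ 0` and the right side exactly when `n_i⁻ ≠ 0`; as `n_i⁺` and
`n_i⁻` are never both nonzero, both vanish.
-/

theorem prod_zpow_eq_one_iff_prod_pow_toNat_eq {ι G : Type*} [CommGroup G] (s : Finset ι)
    (a : ι → G) (n : ι → ℤ) :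
    ∏ i ∈ s, a i ^ n i = 1 ↔ ∏ i ∈ s, a i ^ (n i).toNat = ∏ i ∈ s, a i ^ (-n i).toNat := by
  have zpow_eq_div (i : ι) : a i ^ n i = a i ^ (n i).toNat / a i ^ (-n i).toNat := by
    rw [← zpow_natCast, ← zpow_natCast, div_eq_mul_inv, ← zpow_sub, Int.toNat_sub_toNat_neg]
  simp only [zpow_eq_div, Finset.prod_div_distrib, div_eq_one]

theorem prime_dvd_prod_pow_iff_ne_zero {ι R : Type*} [CommMonoidWithZero R] {s : Finset ι}
    {p : R} (hp : Prime p) {d : ι → R} {i : ι} (hi : i ∈ s) (hdvd : p ∣ d i)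
    (hndvd : ∀ j ∈ s, j ≠ i → ¬ p ∣ d j) (m : ι → ℕ) :
    p ∣ ∏ j ∈ s, d j ^ m j ↔ m i ≠ 0 := by
  rw [hp.dvd_finsetProd_iff]
  constructor
  · rintro ⟨j, hj, hdvd_pow⟩ hmi
    obtain rfl : j = i := by_contra fun hji ↦ hndvd j hj hji (hp.dvd_of_dvd_pow hdvd_pow)
    exact hp.not_dvd_one (by simpa [hmi] using hdvd_pow)
  · exact fun hmi ↦ ⟨i, hi, dvd_pow hdvd hmi⟩

theorem multiplicatively_independent_general {ι G M R : Type*} [Fintype ι] [CommGroup G]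
    [CommMonoid M] [CommMonoidWithZero R] {f : R →* M} (hf : Function.Injective f) (N : G →* M)
    (a : ι → G) (d : ι → R) (hd : ∀ i, f (d i) = N (a i))
    (hp : ∀ i, ∃ p, Prime p ∧ p ∣ d i ∧ ∀ j, j ≠ i → ¬ p ∣ d j)
    (n : ι → ℤ) (h : ∏ i, a i ^ n i = 1) :
    ∀ i, n i = 0 := by
  have map_prod_pow (m : ι → ℕ) : f (∏ i, d i ^ m i) = N (∏ i, a i ^ m i) := by
    simp only [map_prod, map_pow, hd]
  have prod_eq : ∏ i, d i ^ (n i).toNat = ∏ i, d i ^ (-n i).toNat := hf <| by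
    rw [map_prod_pow, map_prod_pow, (prod_zpow_eq_one_iff_prod_pow_toNat_eq _ a n).mp h]
  intro i
  obtain ⟨p, hprime, hdvd, hndvd⟩ := hp i
  have dvd_iff := prime_dvd_prod_pow_iff_ne_zero hprime (Finset.mem_univ i) hdvd
    fun j _ ↦ hndvd j
  have toNat_ne_zero_iff : (n i).toNat ≠ 0 ↔ (-n i).toNat ≠ 0 := by
    rw [← dvd_iff fun j ↦ (n j).toNat, prod_eq, dvd_iff]
  lia

/-- Let `A` be a commutative finite-dimensional unital `ℚ`-algebra and `a₁, …, a_k ∈ Aˣ`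
units whose multiplication maps have integer determinants `d_i`, such that each `d_i` is
divisible by a prime not dividing any other `d_j`.  Then the `a_i` are multiplicatively
independent: `a₁^{n₁} ⋯ a_k^{n_k} = 1` implies all `n_i = 0`. -/
theorem multiplicatively_independent {A : Type*} [CommRing A] [Algebra ℚ A]
    [FiniteDimensional ℚ A] {k : ℕ} (a : Fin k → Aˣ)
    (d : Fin k → ℤ)
    (hd : ∀ i, (d i : ℚ) = LinearMap.det (LinearMap.mulLeft ℚ ((a i : A))))
    (hp : ∀ i, ∃ p : ℕ, p.Prime ∧ (p : ℤ) ∣ d i ∧ ∀ j, j ≠ i → ¬ (p : ℤ) ∣ d j)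
    (n : Fin k → ℤ)
    (h : (∏ i, (a i) ^ (n i)) = (1 : Aˣ)) :
    ∀ i, n i = 0 :=
  -- `hd` fits because `Algebra.norm ℚ x` is by definition the determinant of multiplication by `x`.
  multiplicatively_independent_general (f := (Int.castRingHom ℚ : ℤ →* ℚ)) Int.cast_injective
    ((Algebra.norm ℚ).comp (Units.coeHom A)) a d hd
    (fun i ↦ (hp i).elim fun p hpi ↦ ⟨p, hpi.imp_left Nat.prime_iff_prime_int.mp⟩) n h
end

section
/- Let D be a division ring that is a finite-dimensional ℚ-algebra, and let n ≥ 1. Regard D^n as a right D-vector space on which n×n matrices over D act by left multiplication. Let Σ be a nontrivial finitely generated abelian subgroup of the group of invertible n×n matrices over D such that every α ∈ Σ is unipotent, i.e., α − 1 is a nilpotent matrix. Let 𝔨 := ⋂_{α∈Σ} ker(α − 1) ⊆ D^n, a right D-subspace, and let k := dim_D 𝔨 (its right D-dimension). Then the ℤ-rank of Σ, i.e., dim_ℚ(ℚ ⊗_ℤ Σ) where Σ is viewed as an additive abelian group, is strictly less than n·(n−k)·dim_ℚ D. -/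
open scoped TensorProduct Matrix

set_option maxHeartbeats 1000000

/-!
A unipotent abelian group generates a commutative `ℚ`-algebra, on whose nilradical the exponential
is injective and turns sums into products, with every unipotent element as a value. The resulting
logarithm embeds the group additively in a `ℚ`-space of nilpotent endomorphisms of `V = Dⁿ` that
vanish on the common fixed space `𝔨`. The space of all endomorphisms vanishing on `𝔨` is
`Hom_D(V / 𝔨, V)`, of dimension `(n - k) n dim_ℚ D`, and it contains the projections with kernel
`𝔨`; these are nonzero idempotents, hence not nilpotent, so the inequality is strict.
-/

section Exponential

variable {A : Type*} [CommRing A] [Algebra ℚ A] {x y : A}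

theorem exists_exp_eq_one_add_add_sq_mul (hx : IsNilpotent x) :
    ∃ w : A, IsNilpotent.exp x = 1 + x + x ^ 2 * w := by
  obtain ⟨k, hk⟩ := hx
  have hk' : x ^ (k + 2) = 0 := by rw [pow_add, hk, zero_mul]
  refine ⟨∑ i ∈ Finset.range k, ((i + 2).factorial : ℚ)⁻¹ • x ^ i, ?_⟩
  rw [IsNilpotent.exp_eq_sum hk', Finset.sum_range_succ', Finset.sum_range_succ', Finset.mul_sum]
  simp only [zero_add, Nat.factorial_zero, Nat.factorial_one, Nat.cast_one, inv_one, one_smul,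
    pow_zero, pow_one, add_assoc, one_add_one_eq_two, mul_smul_comm, ← pow_add, add_comm 2]
  ring

theorem associated_exp_sub_one (hx : IsNilpotent x) : Associated x (IsNilpotent.exp x - 1) := by
  obtain ⟨w, hw⟩ := exists_exp_eq_one_add_add_sq_mul hx
  have hunit : IsUnit (1 + x * w) :=
    ((Commute.all x w).isNilpotent_mul_right hx).isUnit_one_add
  exact ⟨hunit.unit, by rw [hunit.unit_spec, hw]; ring⟩

theorem exp_injOn_setOf_isNilpotent : Set.InjOn IsNilpotent.exp {x : A | IsNilpotent x} := by
  intro x hx y hy hxy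
  have hsub : IsNilpotent (x - y) := (Commute.all x y).isNilpotent_sub hx hy
  have hexp : IsNilpotent.exp (x - y) = 1 := by
    rw [sub_eq_add_neg, IsNilpotent.exp_add_of_commute (Commute.all x (-y)) hx hy.neg, hxy,
      IsNilpotent.exp_mul_exp_neg_self hy]
  have hzero := associated_exp_sub_one hsub
  rwa [hexp, sub_self, associated_zero_iff_eq_zero, sub_eq_zero] at hzero

-- Multiplying `1 + x` by `exp (-x)` cancels the linear term, so `exp (-x) * (1 + x) - 1` is
-- divisible by `x ^ 2` and has smaller nilpotency class than `x`.
theorem exists_isNilpotent_exp_eq_one_add (hx : IsNilpotent x) :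
    ∃ y : A, IsNilpotent y ∧ IsNilpotent.exp y = 1 + x := by
  obtain ⟨k, hk⟩ := hx
  induction k using Nat.strong_induction_on generalizing x with
  | _ k ih =>
    have hx : IsNilpotent x := ⟨k, hk⟩
    rcases lt_or_ge k 2 with hk2 | hk2
    · have hx0 : x = 0 := by simpa using pow_eq_zero_of_le (Nat.le_of_lt_succ hk2) hk
      exact ⟨0, .zero, by simp [hx0]⟩
    · obtain ⟨w, hw⟩ := exists_exp_eq_one_add_add_sq_mul hx.neg
      let z := x ^ 2 * (w * (1 + x) - 1)
      have hz : z ^ (k - 1) = 0 := by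
        rw [mul_pow, ← pow_mul, pow_eq_zero_of_le (by omega) hk, zero_mul]
      have hexp : 1 + z = IsNilpotent.exp (-x) * (1 + x) := by rw [hw]; ring
      obtain ⟨y, hy, hyz⟩ := ih (k - 1) (by omega) hz
      refine ⟨x + y, (Commute.all x y).isNilpotent_add hx hy, ?_⟩
      rw [IsNilpotent.exp_add_of_commute (Commute.all x y) hx hy, hyz, hexp, ← mul_assoc,
        IsNilpotent.exp_mul_exp_neg_self hx, one_mul]

end Exponential

section Logarithm

variable {H : Type*} [CommGroup H]

theorem exists_addMonoidHom_exp_eq_of_commRing {A : Type*} [CommRing A] [Algebra ℚ A] (f : H →* A)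
    (hf : ∀ h, IsNilpotent (f h - 1)) :
    ∃ g : Additive H →+ A, ∀ h, IsNilpotent (g (.ofMul h)) ∧
      IsNilpotent.exp (g (.ofMul h)) = f h := by
  choose g hg hexp using fun h => exists_isNilpotent_exp_eq_one_add (hf h)
  simp only [add_sub_cancel] at hexp
  refine ⟨.mk' (fun a => g a.toMul) fun a b => ?_, fun h => ⟨hg h, hexp h⟩⟩
  refine exp_injOn_setOf_isNilpotent (hg _) ((Commute.all _ _).isNilpotent_add (hg _) (hg _)) ?_
  rw [IsNilpotent.exp_add_of_commute (Commute.all _ _) (hg _) (hg _)]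
  simp only [hexp, toMul_add, map_mul]

open scoped IsMulCommutative in
theorem exists_addMonoidHom_exp_eq {E : Type*} [Ring E] [Algebra ℚ E] (f : H →* E)
    (hf : ∀ h, IsNilpotent (f h - 1)) :
    ∃ g : Additive H →+ E, (∀ h, IsNilpotent.exp (g (.ofMul h)) = f h) ∧
      (∀ h, g (.ofMul h) ∈ Ideal.span {f h - 1}) ∧
      ∀ x ∈ Submodule.span ℚ (Set.range g), IsNilpotent x := by
  let A := Algebra.adjoin ℚ (Set.range f)
  have : IsMulCommutative A := Algebra.isMulCommutative_adjoin ℚ <| by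
    rintro _ ⟨a, rfl⟩ _ ⟨b, rfl⟩
    rw [← map_mul, mul_comm, map_mul]
  let fA : H →* A := f.codRestrict A fun h => Algebra.subset_adjoin ⟨h, rfl⟩
  have hfA (h : H) : IsNilpotent (fA h - 1) :=
    (IsNilpotent.map_iff (f := A.val) Subtype.val_injective).mp (hf h)
  obtain ⟨g, hg⟩ := exists_addMonoidHom_exp_eq_of_commRing fA hfA
  refine ⟨A.val.toAddMonoidHom.comp g, fun h => ?_, fun h => ?_, fun x hx => ?_⟩
  · exact (IsNilpotent.map_exp (hg h).1 A.val).symm.trans (congrArg A.val (hg h).2)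
  · obtain ⟨c, hc⟩ := (associated_exp_sub_one (hg h).1).symm.dvd
    rw [(hg h).2, mul_comm] at hc
    exact Ideal.mem_span_singleton'.mpr ⟨c, (congrArg A.val hc).symm⟩
  · have hspan : Submodule.span ℚ (Set.range (A.val.toAddMonoidHom.comp g)) ≤
        ((nilradical A).restrictScalars ℚ).map A.val.toLinearMap := by
      rw [Submodule.span_le]
      rintro _ ⟨a, rfl⟩
      exact ⟨g a, (hg a.toMul).1, rfl⟩
    obtain ⟨a, ha, rfl⟩ := hspan hx
    exact IsNilpotent.map (mem_nilradical.mp ha) A.val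

end Logarithm

section Rank

theorem rank_tensorProduct_le_finrank_of_injective {R K M V : Type*} [CommRing R] [Field K]
    [Algebra R K] [IsFractionRing R K] [AddCommGroup M] [Module R M] [AddCommGroup V] [Module R V]
    [Module K V] [IsScalarTower R K V] [FiniteDimensional K V] (g : M →ₗ[R] V)
    (hg : Function.Injective g) : Module.rank K (K ⊗[R] M) ≤ Module.finrank K V := by
  have hM : Module.rank R M ≤ Module.finrank K V := by
    have h := LinearMap.lift_rank_le_of_injective g hg
    rwa [← IsFractionRing.rank_right_eq R K V, ← Module.finrank_eq_rank K V, Cardinal.lift_natCast,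
      Cardinal.lift_le_nat_iff] at h
  rwa [← Cardinal.lift_le_nat_iff, (TensorProduct.isBaseChange R M K).lift_rank_eq,
    Cardinal.lift_le_nat_iff]

theorem rank_tensorProduct_lt_of_unipotent_of_leftIdeal {E H : Type*} [Ring E] [Algebra ℚ E]
    [CommGroup H] (f : H →* E) (hf : Function.Injective f) (hunip : ∀ h, IsNilpotent (f h - 1))
    (S : Ideal E) [Module.Finite ℚ (S.restrictScalars ℚ)] (hfS : ∀ h, f h - 1 ∈ S)
    (hS : ∃ p ∈ S, ¬ IsNilpotent p) :
    Module.rank ℚ (ℚ ⊗[ℤ] Additive H) < Module.finrank ℚ (S.restrictScalars ℚ) := by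
  obtain ⟨g, hexp, hspan, hnil⟩ := exists_addMonoidHom_exp_eq f hunip
  let T := Submodule.span ℚ (Set.range g)
  have hgS (a : Additive H) : g a ∈ S :=
    (Ideal.span_singleton_le_iff_mem S).mpr (hfS a.toMul) (hspan a.toMul)
  have hTS : T < S.restrictScalars ℚ := by
    obtain ⟨p, hpS, hp⟩ := hS
    refine lt_of_le_of_ne (Submodule.span_le.mpr ?_) fun h => hp (hnil p ?_)
    · rintro _ ⟨a, rfl⟩
      exact hgS a
    · exact h.ge hpS
  have : Module.Finite ℚ T := Submodule.finiteDimensional_of_le hTS.le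
  let gT : Additive H →+ T := g.codRestrict T fun a => Submodule.subset_span ⟨a, rfl⟩
  have hgT : Function.Injective gT := fun a b hab => by
    have hgab : g a = g b := congrArg Subtype.val hab
    exact Additive.toMul.injective <| hf <| by
      rw [← hexp a.toMul, ← hexp b.toMul, ofMul_toMul, ofMul_toMul, hgab]
  exact (rank_tensorProduct_le_finrank_of_injective gT.toIntLinearMap hgT).trans_lt
    (Nat.cast_lt.mpr (Submodule.finrank_lt_finrank_of_lt hTS))

end Rank

section VanishingOn

variable {D V : Type*} [AddCommGroup V]

/-- The left ideal of endomorphisms of `V` that vanish on the submodule `K`. -/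
def leftIdealVanishingOn [Ring D] [Module D V] (K : Submodule D V) : Ideal (Module.End D V) where
  carrier := {φ | K ≤ LinearMap.ker φ}
  add_mem' hφ hψ v hv := by
    rw [LinearMap.mem_ker, LinearMap.add_apply, hφ hv, hψ hv, add_zero]
  zero_mem' _ _ := rfl
  smul_mem' φ ψ hψ v hv := by
    rw [LinearMap.mem_ker, smul_eq_mul, Module.End.mul_apply, hψ hv, map_zero]

/-- Endomorphisms of `V` vanishing on `K`, as linear maps `V ⧸ K → V`. The equivalence is linear
over a smaller ring `k` of scalars, because these spaces are not `D`-modules when `D` is not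
commutative. -/
def leftIdealVanishingOnEquiv (k : Type*) [CommSemiring k] [Ring D] [Module D V] [Module k V]
    [SMul k D] [SMulCommClass D k V] [IsScalarTower k D V] (K : Submodule D V) :
    (leftIdealVanishingOn K).restrictScalars k ≃ₗ[k] (V ⧸ K →ₗ[D] V) where
  toFun φ := K.liftQ φ.1 φ.2
  map_add' _ _ := by ext; rfl
  map_smul' _ _ := by ext; rfl
  invFun ψ := ⟨ψ ∘ₗ K.mkQ, fun v hv => by
    simp [(Submodule.Quotient.mk_eq_zero K).mpr hv]⟩
  left_inv _ := rfl
  right_inv _ := by ext; rfl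

theorem exists_mem_leftIdealVanishingOn_not_isNilpotent [DivisionRing D] [Module D V]
    {K : Submodule D V} (hK : K ≠ ⊤) : ∃ p ∈ leftIdealVanishingOn K, ¬ IsNilpotent p := by
  obtain ⟨C, hCK⟩ := K.exists_isCompl
  refine ⟨C.projection K hCK.symm, (Submodule.ker_projection _).ge, fun hnil => hK ?_⟩
  have hzero := (Submodule.isIdempotentElem_projection hCK.symm).eq_zero_of_isNilpotent hnil
  rw [← Submodule.ker_projection hCK.symm, hzero, LinearMap.ker_zero]

theorem rank_tensorProduct_lt_of_unipotent {H : Type*} [DivisionRing D] [Algebra ℚ D] [Module D V]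
    [Module ℚ V] [FiniteDimensional ℚ V] [CommGroup H] [Nontrivial H] (f : H →* Module.End D V)
    (hf : Function.Injective f) (hunip : ∀ h, IsNilpotent (f h - 1)) (K : Submodule D V)
    (hK : ∀ h, K ≤ LinearMap.ker (f h - 1)) :
    Module.rank ℚ (ℚ ⊗[ℤ] Additive H) < (Module.finrank D (V ⧸ K) * Module.finrank ℚ V : ℕ) := by
  have : FiniteDimensional D V := .of_restrictScalars_finite ℚ D V
  have hKtop : K ≠ ⊤ := by
    rintro rfl
    obtain ⟨h, hh⟩ := exists_ne (1 : H)
    refine hh (hf ?_)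
    rw [map_one, ← sub_eq_zero, ← LinearMap.ker_eq_top]
    exact top_le_iff.mp (hK h)
  rw [← Module.finrank_linearMap D ℚ, ← (leftIdealVanishingOnEquiv ℚ K).finrank_eq]
  exact rank_tensorProduct_lt_of_unipotent_of_leftIdeal f hf hunip _ hK
    (exists_mem_leftIdealVanishingOn_not_isNilpotent hKtop)

end VanishingOn

section Matrix

/-- Square matrices over `R` as endomorphisms of the right `R`-module `ι → R` of column vectors;
right modules are modules over `Rᵐᵒᵖ`. -/
def matrixRingEquivEndVec (ι R : Type*) [Fintype ι] [DecidableEq ι] [Semiring R] :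
    Matrix ι ι R ≃+* Module.End Rᵐᵒᵖ (ι → R) :=
  (RingEquiv.moduleEndSelfOp R).mapMatrix.trans (endVecRingEquivMatrixEnd ι Rᵐᵒᵖ R).symm

theorem matrixRingEquivEndVec_apply {ι R : Type*} [Fintype ι] [DecidableEq ι] [Semiring R]
    (M : Matrix ι ι R) (v : ι → R) : matrixRingEquivEndVec ι R M v = M *ᵥ v :=
  rfl

theorem finrank_mulOpposite_pi (ι R : Type*) [Fintype ι] [Semiring R] [StrongRankCondition Rᵐᵒᵖ] :
    Module.finrank Rᵐᵒᵖ (ι → R) = Fintype.card ι := by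
  rw [(LinearEquiv.piCongrRight fun _ : ι => MulOpposite.opLinearEquiv (M := R) Rᵐᵒᵖ).finrank_eq,
    Module.finrank_fintype_fun_eq_card]

theorem rank_lt_of_unipotent_abelian_subgroup_general {D : Type*} [DivisionRing D] [Algebra ℚ D]
    [FiniteDimensional ℚ D] (n : ℕ) {H : Type*} [CommGroup H] [Nontrivial H]
    (f : H →* (Matrix (Fin n) (Fin n) D)ˣ) (hf : Function.Injective f)
    (hunip : ∀ h : H, IsNilpotent ((f h).val - 1)) (K : Submodule Dᵐᵒᵖ (Fin n → D))
    (hK : (K : Set (Fin n → D)) = {v : Fin n → D | ∀ h : H, ((f h).val - 1) *ᵥ v = 0}) :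
    Module.rank ℚ (ℚ ⊗[ℤ] Additive H) <
      (n * (n - Module.finrank Dᵐᵒᵖ K) * Module.finrank ℚ D : ℕ) := by
  let e := matrixRingEquivEndVec (Fin n) D
  let F : H →* Module.End Dᵐᵒᵖ (Fin n → D) := (e : _ →* _).comp ((Units.coeHom _).comp f)
  have hF (h : H) : F h - 1 = e ((f h).val - 1) := by rw [map_sub, map_one]; rfl
  have hFinj : Function.Injective F := e.injective.comp (Units.val_injective.comp hf)
  have hFunip (h : H) : IsNilpotent (F h - 1) := hF h ▸ (hunip h).map e
  have hFK (h : H) : K ≤ LinearMap.ker (F h - 1) := fun v hv => by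
    rw [hF, LinearMap.mem_ker, matrixRingEquivEndVec_apply]
    exact hK.subset hv h
  have hrank := rank_tensorProduct_lt_of_unipotent F hFinj hFunip K hFK
  have : FiniteDimensional Dᵐᵒᵖ (Fin n → D) := .of_restrictScalars_finite ℚ Dᵐᵒᵖ (Fin n → D)
  have hquot : Module.finrank Dᵐᵒᵖ ((Fin n → D) ⧸ K) = n - Module.finrank Dᵐᵒᵖ K := by
    rw [Submodule.finrank_quotient, finrank_mulOpposite_pi, Fintype.card_fin]
  have hdim : Module.finrank ℚ (Fin n → D) = n * Module.finrank ℚ D := by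
    simp [Module.finrank_pi_fintype]
  rwa [hquot, hdim, mul_left_comm, ← mul_assoc] at hrank

end Matrix

/-- Let `D` be a division ring that is a finite-dimensional `ℚ`-algebra and `n ≥ 1`.  Let
`Σ` be a nontrivial finitely generated abelian subgroup of the group of invertible `n × n`
matrices over `D` consisting of unipotent matrices (here realised as the image of an
injective homomorphism `f` from a nontrivial finitely generated commutative group `H`).
Let `𝔨 = ⋂_{α ∈ Σ} ker(α - 1) ⊆ Dⁿ` (a right `D`-subspace, i.e. a `Dᵐᵒᵖ`-submodule) and
`k = dim_D 𝔨`.  Then the `ℤ`-rank of `Σ`, i.e. `dim_ℚ (ℚ ⊗_ℤ Σ)`, is strictly less than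
`n ⬝ (n - k) ⬝ dim_ℚ D`. -/
theorem rank_lt_of_unipotent_abelian_subgroup {D : Type*} [DivisionRing D] [Algebra ℚ D]
    [FiniteDimensional ℚ D] (n : ℕ) (hn : 1 ≤ n)
    (H : Type*) [CommGroup H] [Group.FG H] [Nontrivial H]
    (f : H →* (Matrix (Fin n) (Fin n) D)ˣ) (hf : Function.Injective f)
    (hunip : ∀ h : H, IsNilpotent ((f h).val - 1))
    (K : Submodule Dᵐᵒᵖ (Fin n → D))
    (hK : (K : Set (Fin n → D)) =
      {v : Fin n → D | ∀ h : H, ((f h).val - 1) *ᵥ v = 0}) :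
    Module.finrank ℚ (ℚ ⊗[ℤ] (Additive H)) <
      n * (n - Module.finrank Dᵐᵒᵖ K) * Module.finrank ℚ D :=
  Module.finrank_lt_of_rank_lt
    (rank_lt_of_unipotent_abelian_subgroup_general n f hf hunip K hK)
end

section
/- Let R be a (unital, not necessarily commutative) ring whose additive group is finitely generated and torsion-free. Then for every a ∈ R there exists a positive integer κ such that a + κ·1 is left regular, i.e., the map R → R, x ↦ (a + κ·1)·x, is injective. -/
/-!
Finite generation makes `a` integral over `ℤ`, hence `p(a) = 0` for some nonzero `p`. Since `X - s`
divides `p(s) - p`, the element `a - s` divides the scalar `p(s)`. By torsion-freeness this scalar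
is regular unless `s` is a root of `p`, so `a - s` is regular for all but finitely many `s`; one of
the infinitely many values `s = -1, -2, -3, …` is not among the exceptions.
-/

open Polynomial

section

variable {S A M : Type*} [CommRing S] [Ring A] [Algebra S A] [AddCommGroup M] [Module S M]
  [Module A M] [IsScalarTower S A M] {a : A}

theorem isSMulRegular_sub_algebraMap_of_aeval_eq_zero {p : S[X]} (hp : aeval a p = 0) {s : S}
    (hs : IsSMulRegular M (p.eval s)) : IsSMulRegular M (a - algebraMap S A s) := by
  obtain ⟨q, hq⟩ : X - C s ∣ C (p.eval s) - p := dvd_sub_comm.mp X_sub_C_dvd_sub_C_eval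
  have hfactor : aeval a q * (a - algebraMap S A s) = algebraMap S A (p.eval s) := by
    simpa [hp] using congr(aeval a $(hq.trans (mul_comm (X - C s) q))).symm
  refine IsSMulRegular.of_mul (a := aeval a q) ?_
  rwa [hfactor, isSMulRegular_algebraMap_iff]

variable (M) [IsDomain S] [Module.IsTorsionFree S M]

theorem finite_setOfPred_not_isSMulRegular_sub_algebraMap (ha : IsAlgebraic S a) :
    {s : S | ¬ IsSMulRegular M (a - algebraMap S A s)}.Finite := by
  obtain ⟨p, hp, hpa⟩ := ha
  refine (finite_setOfPred_isRoot hp).subset fun s hs => ?_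
  by_contra hroot
  exact hs (isSMulRegular_sub_algebraMap_of_aeval_eq_zero hpa
    (IsRegular.of_ne_zero hroot).isSMulRegular)

theorem exists_add_nat_leftRegular_general [CharZero S] (ha : IsAlgebraic S a) :
    ∃ κ : ℕ, 0 < κ ∧ IsSMulRegular M (a + (κ : A)) := by
  have hinj : Function.Injective fun n : ℕ => -(n : S) := neg_injective.comp Nat.cast_injective
  obtain ⟨κ, hκ, hreg⟩ := (Set.Ioi_infinite 0).exists_notMem_finite
    ((finite_setOfPred_not_isSMulRegular_sub_algebraMap M ha).preimage hinj.injOn)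
  exact ⟨κ, hκ, by simpa using hreg⟩

end

/-- Let `R` be a unital ring whose additive group is finitely generated and torsion-free.
Then for every `a ∈ R` there is a positive integer `κ` such that `a + κ·1` is left
regular, i.e. left multiplication by `a + κ·1` is injective. -/
theorem exists_add_nat_leftRegular {R : Type*} [Ring R] [AddGroup.FG R]
    [NoZeroSMulDivisors ℤ R] (a : R) :
    ∃ κ : ℕ, 0 < κ ∧ Function.Injective (fun x : R => (a + (κ : R)) * x) := by
  have : Module.Finite ℤ R := Module.Finite.iff_addGroup_fg.mpr inferInstance
  exact exists_add_nat_leftRegular_general R (Algebra.IsIntegral.isIntegral (R := ℤ) a).isAlgebraic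
end

section
/- Let K be a number field with ring of integers R, and let I be a nonzero ideal of R. Call an element x ∈ R totally positive if φ(x) > 0 for every ring homomorphism (field embedding) φ : K → ℝ. Then the subring of R generated by the set of totally positive elements of 1 + I contains I. (Consequently, this subring has finite index in the additive group of R, i.e., it is an order in R.) -/
/-!
Call an element totally positive if finitely many given homomorphisms to an archimedean group send
it to positive elements. If `a` and a totally positive `m` lie in `A`, then for large `k` both
`u + a + k m` and `u + k m` are totally positive elements of `u + A`, and their difference is `a`.
A nonzero ideal of a ring of integers contains such an `m`, namely its absolute norm.
-/

open Filter

lemma addSubgroup_closure_le_subring_closure {R : Type*} [NonAssocRing R] (s : Set R) :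
    AddSubgroup.closure s ≤ (Subring.closure s).toAddSubgroup :=
  (AddSubgroup.closure_le _).2 Subring.subset_closure

lemma map_absNorm_pos {S F : Type*} [CommRing S] [IsDedekindDomain S]
    [Module.Free ℤ S] [Module.Finite ℤ S] [Semiring F] [PartialOrder F] [IsStrictOrderedRing F]
    {I : Ideal S} (hI : I ≠ ⊥) (φ : S →+* F) : 0 < φ (Ideal.absNorm I) := by
  rw [map_natCast, Nat.cast_pos]
  exact Nat.pos_of_ne_zero (Ideal.absNorm_eq_zero_iff.not.2 hI)

section TotallyPositive

variable {G F H ι : Type*} [AddCommGroup G] [AddCommGroup F] [LinearOrder F]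
  [IsOrderedAddMonoid F] [Archimedean F] [FunLike H G F] [AddMonoidHomClass H G F] [Finite ι]
  (φ : ι → H) {m : G}

lemma eventually_forall_pos_map_add_nsmul (hm : ∀ i, 0 < φ i m) (x : G) :
    ∀ᶠ k : ℕ in atTop, ∀ i, 0 < φ i (x + k • m) := by
  refine eventually_all.2 fun i ↦ ?_
  have htendsto : Tendsto (fun k : ℕ ↦ φ i x + k • φ i m) atTop atTop :=
    tendsto_atTop_add_const_left _ _ (tendsto_id.atTop_nsmul_const (hm i))
  filter_upwards [htendsto.eventually_ge_atTop (φ i m)] with k hk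
  simpa only [map_add, map_nsmul] using (hm i).trans_le hk

theorem ideal_subset_subring_closure_totallyPositive_general {A : AddSubgroup G} (hmA : m ∈ A)
    (hm : ∀ i, 0 < φ i m) (u : G) :
    A ≤ AddSubgroup.closure {x | (∃ a ∈ A, x = u + a) ∧ ∀ i, 0 < φ i x} := by
  intro a ha
  obtain ⟨k, hpos_add, hpos⟩ := ((eventually_forall_pos_map_add_nsmul φ hm (u + a)).and
    (eventually_forall_pos_map_add_nsmul φ hm u)).exists
  have hkA : k • m ∈ A := A.nsmul_mem hmA k
  have ha_eq : a = (u + a + k • m) - (u + k • m) := by abel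
  rw [ha_eq]
  exact sub_mem
    (AddSubgroup.subset_closure ⟨⟨a + k • m, A.add_mem ha hkA, add_assoc u a _⟩, hpos_add⟩)
    (AddSubgroup.subset_closure ⟨⟨k • m, hkA, rfl⟩, hpos⟩)

end TotallyPositive

/-- Let `K` be a number field with ring of integers `R` and `I` a nonzero ideal of `R`.
Then the subring of `R` generated by the totally positive elements of `1 + I`
contains `I`. -/
theorem ideal_subset_subring_closure_totallyPositive {K : Type*} [Field K] [NumberField K]
    (I : Ideal (NumberField.RingOfIntegers K)) (hI : I ≠ ⊥) :
    (I : Set (NumberField.RingOfIntegers K)) ⊆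
      (Subring.closure {x : NumberField.RingOfIntegers K |
        (∃ a ∈ I, x = 1 + a) ∧
        ∀ φ : K →+* ℝ, 0 < φ (algebraMap (NumberField.RingOfIntegers K) K x)} :
        Set (NumberField.RingOfIntegers K)) :=
  (ideal_subset_subring_closure_totallyPositive_general (A := I.toAddSubgroup)
    (fun φ : K →+* ℝ ↦ φ.comp (algebraMap (NumberField.RingOfIntegers K) K))
    (Ideal.absNorm_mem I) (fun _ ↦ map_absNorm_pos hI _) 1).trans
      (addSubgroup_closure_le_subring_closure _)
end

section
/- Let V and W be finite-dimensional ℚ-vector spaces, let S and T be groups, and let σ : S → GL(V) and τ : T → GL(W) be group homomorphisms each satisfying the strong faithfulness condition (SF): for all s, s' ∈ S and all ρ ∈ GL(V), σ_s = ρ ∘ σ_{s'} ∘ ρ^{−1} implies s = s' (and the analogous condition for τ on W). Suppose there exist injective group homomorphisms 𝔱 : S → T and 𝔰 : T → S, and injective ℚ-linear maps 𝔟 : V → W and 𝔞 : W → V, such that 𝔟(σ_s(x)) = τ_{𝔱(s)}(𝔟(x)) for all s ∈ S, x ∈ V, and 𝔞(τ_t(y)) = σ_{𝔰(t)}(𝔞(y))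 for all t ∈ T, y ∈ W. Then 𝔰 ∘ 𝔱 = id_S, 𝔱 ∘ 𝔰 = id_T, and 𝔟 and 𝔞 are bijective. -/
/-!
An injective endomorphism of an Artinian module is an automorphism. Hence `𝔞 ∘ 𝔟` is invertible,
and by equivariance it conjugates `σ s` into `σ (𝔰 (𝔱 s))`; strong faithfulness of `σ` then forces
`𝔰 (𝔱 s) = s`, while invertibility of the composite makes both injective factors bijective.
-/

/-- The condition (SF) for a map `σ` into a monoid: distinct elements have non-conjugate images.
Conjugacy is by units of `M`, so for `M = Module.End R V` it is conjugacy under `GL(V)`. -/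
def StronglyFaithful {S M : Type*} [Monoid M] (σ : S → M) : Prop :=
  ∀ ⦃s s' : S⦄, IsConj (σ s) (σ s') → s = s'

theorem StronglyFaithful.of_units_conj {S M : Type*} [Monoid M] {σ : S → Mˣ}
    (hσ : ∀ (s s' : S) (ρ : Mˣ), σ s = ρ * σ s' * ρ⁻¹ → s = s') :
    StronglyFaithful fun s => (σ s : M) := by
  rintro s s' ⟨ρ, hρ⟩
  have hconj : σ s' = ρ * σ s * ρ⁻¹ := eq_mul_inv_of_mul_eq hρ.units_of_val.eq.symm
  exact (hσ s' s ρ hconj).symm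

section Artinian

variable {R V W : Type*} [Semiring R] [AddCommMonoid V] [Module R V] [IsArtinian R V]
  [AddCommMonoid W] [Module R W]

theorem isConj_of_semiconj_of_injective {f g h : Module.End R V} (hfgh : Function.Semiconj f g h)
    (hf : Function.Injective f) : IsConj g h := by
  have hunit : IsUnit f :=
    (Module.End.isUnit_iff f).2 (IsArtinian.bijective_of_injective_endomorphism f hf)
  exact ⟨hunit.unit, LinearMap.ext hfgh⟩

theorem bijective_and_bijective_of_injective_of_injective {f : V →ₗ[R] W} {g : W →ₗ[R] V}
    (hf : Function.Injective f) (hg : Function.Injective g) :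
    Function.Bijective f ∧ Function.Bijective g := by
  have hgf : Function.Bijective (g ∘ f) :=
    IsArtinian.bijective_of_injective_endomorphism (g ∘ₗ f) (hg.comp hf)
  have hg_bij : Function.Bijective g := ⟨hg, hgf.surjective.of_comp⟩
  exact ⟨(Function.Bijective.of_comp_iff' hg_bij f).1 hgf, hg_bij⟩

variable {S T : Type*} {σ : S → Module.End R V} {τ : T → Module.End R W} {𝔱 : S → T} {𝔰 : T → S}
  {𝔟 : V →ₗ[R] W} {𝔞 : W →ₗ[R] V}

theorem StronglyFaithful.leftInverse_of_semiconj (hσ : StronglyFaithful σ)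
    (h𝔟 : Function.Injective 𝔟) (h𝔞 : Function.Injective 𝔞)
    (hb : ∀ s, Function.Semiconj 𝔟 (σ s) (τ (𝔱 s)))
    (ha : ∀ t, Function.Semiconj 𝔞 (τ t) (σ (𝔰 t))) :
    Function.LeftInverse 𝔰 𝔱 := fun s => by
  have hsemiconj : Function.Semiconj (𝔞 ∘ₗ 𝔟) (σ s) (σ (𝔰 (𝔱 s))) := (ha (𝔱 s)).comp_left (hb s)
  have hconj : IsConj (σ s) (σ (𝔰 (𝔱 s))) :=
    isConj_of_semiconj_of_injective hsemiconj (h𝔞.comp h𝔟)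
  exact (hσ hconj).symm

theorem strongly_faithful_mutual_embedding_rigidity_general (hσ : StronglyFaithful σ)
    (h𝔰 : Function.Injective 𝔰) (h𝔟 : Function.Injective 𝔟) (h𝔞 : Function.Injective 𝔞)
    (hb : ∀ s, Function.Semiconj 𝔟 (σ s) (τ (𝔱 s)))
    (ha : ∀ t, Function.Semiconj 𝔞 (τ t) (σ (𝔰 t))) :
    Function.LeftInverse 𝔰 𝔱 ∧ Function.RightInverse 𝔰 𝔱 ∧
      Function.Bijective 𝔟 ∧ Function.Bijective 𝔞 := by
  have hst : Function.LeftInverse 𝔰 𝔱 := hσ.leftInverse_of_semiconj h𝔟 h𝔞 hb ha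
  exact ⟨hst, hst.rightInverse_of_injective h𝔰,
    bijective_and_bijective_of_injective_of_injective h𝔟 h𝔞⟩

end Artinian

/-- Let `σ : S → GL(V)` and `τ : T → GL(W)` be representations on finite-dimensional
`ℚ`-vector spaces, each strongly faithful (conjugate images force equal group elements).
If there are injective group homomorphisms `𝔱 : S → T`, `𝔰 : T → S` and injective
equivariant `ℚ`-linear maps `𝔟 : V → W`, `𝔞 : W → V`, then `𝔰 ∘ 𝔱 = id`, `𝔱 ∘ 𝔰 = id`,
and `𝔟` and `𝔞` are bijective. -/
theorem strongly_faithful_mutual_embedding_rigidity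
    {V W : Type*} [AddCommGroup V] [Module ℚ V] [FiniteDimensional ℚ V]
    [AddCommGroup W] [Module ℚ W] [FiniteDimensional ℚ W]
    {S T : Type*} [Group S] [Group T]
    (σ : S →* (Module.End ℚ V)ˣ) (τ : T →* (Module.End ℚ W)ˣ)
    (hσSF : ∀ (s s' : S) (ρ : (Module.End ℚ V)ˣ), σ s = ρ * σ s' * ρ⁻¹ → s = s')
    (hτSF : ∀ (t t' : T) (ρ : (Module.End ℚ W)ˣ), τ t = ρ * τ t' * ρ⁻¹ → t = t')
    (𝔱 : S →* T) (h𝔱 : Function.Injective 𝔱)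
    (𝔰 : T →* S) (h𝔰 : Function.Injective 𝔰)
    (𝔟 : V →ₗ[ℚ] W) (h𝔟 : Function.Injective 𝔟)
    (𝔞 : W →ₗ[ℚ] V) (h𝔞 : Function.Injective 𝔞)
    (hb : ∀ (s : S) (x : V), 𝔟 ((σ s : Module.End ℚ V) x) = (τ (𝔱 s) : Module.End ℚ W) (𝔟 x))
    (ha : ∀ (t : T) (y : W), 𝔞 ((τ t : Module.End ℚ W) y) = (σ (𝔰 t) : Module.End ℚ V) (𝔞 y)) :
    (∀ s : S, 𝔰 (𝔱 s) = s) ∧ (∀ t : T, 𝔱 (𝔰 t) = t) ∧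
      Function.Bijective 𝔟 ∧ Function.Bijective 𝔞 :=
  strongly_faithful_mutual_embedding_rigidity_general (τ := fun t => (τ t : Module.End ℚ W))
    (.of_units_conj hσSF) h𝔰 h𝔟 h𝔞 hb ha
end
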